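/- arXiv:2410.08757 — 5 statements merged into one kernel-verified Lean document; each statement's English description precedes it below -/
import Mathlib

section
/- Let κ be a regular uncountable cardinal and let (T,<_T) be a κ-tree. Then T is special if and only if there exist a club D ⊆ κ and an ordinal-valued function c defined on T↾D such that c(x) < ht(x) for every x ∈ T↾D, and c(x) ≠ c(y) whenever x <_T y with both x,y ∈ T↾D. -/
open Set Cardinal Ordinal Order

noncomputable section

universe u

/-- `D` is a club (closed unbounded set) in `κ`. -/
def IsClubIn (D : Set Ordinal.{0}) (κ : Ordinal.{0}) : Prop :=
  D ⊆ Iio κ ∧ (∀ ε, ε < κ → 0 < ε → sSup (D ∩ Iio ε) = ε → ε ∈ D) ∧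
    ∀ α, α < κ → ∃ δ ∈ D, α < δ

/-- A chain with respect to a strict relation. -/
def chainIn {T : Type u} (lt : T → T → Prop) (c : Set T) : Prop :=
  ∀ a ∈ c, ∀ b ∈ c, a = b ∨ lt a b ∨ lt b a

/-- An antichain with respect to a strict relation. -/
def antichainIn {T : Type u} (lt : T → T → Prop) (A : Set T) : Prop :=
  ∀ a ∈ A, ∀ b ∈ A, a ≠ b → ¬ lt a b ∧ ¬ lt b a

/-- The subset `S` is special with respect to `lt`: there is a regressive map
each of whose fibers is the union of fewer than `κ` antichains. -/
def SpecialOn {T : Type u} (κ : Cardinal.{0}) (S : Set T) (lt : T → T → Prop) : Prop :=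
  ∃ f : T → T,
    (∀ x ∈ S, f x ∈ S ∧ ((∃ y ∈ S, lt y x) → lt (f x) x)) ∧
    ∀ z : T, ∃ 𝒜 : Set (Set T), #𝒜 < Cardinal.lift.{u} κ ∧
      (∀ A ∈ 𝒜, A ⊆ S ∧ antichainIn lt A) ∧ {x ∈ S | f x = z} ⊆ ⋃₀ 𝒜

/-- A set is well-ordered by a relation. -/
def wellOrderedOn {T : Type u} (A : Set T) (lt : T → T → Prop) : Prop :=
  (∀ a ∈ A, ∀ b ∈ A, lt a b ∨ a = b ∨ lt b a) ∧
  (∀ B ⊆ A, B.Nonempty → ∃ m ∈ B, ∀ b ∈ B, ¬ lt b m)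

/-- The height of a point of a tree: the order type of its set of predecessors. -/
noncomputable def htOf {T : Type} (lt : T → T → Prop) (x : T) : Ordinal.{0} := by
  classical
  exact if h : IsWellOrder {y // lt y x} (fun a b => lt a.1 b.1) then @Ordinal.type _ _ h
    else 0

/-- `(T, lt)` is a `κ`-tree. -/
def IsKTree {T : Type} (κ : Cardinal.{0}) (lt : T → T → Prop) : Prop :=
  (∀ x y z : T, lt x y → lt y z → lt x z) ∧
  (∀ x : T, ¬ lt x x) ∧
  (∀ x : T, wellOrderedOn {y | lt y x} lt) ∧
  (∀ x : T, htOf lt x < κ.ord) ∧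
  (∀ α, α < κ.ord → {x : T | htOf lt x = α}.Nonempty) ∧
  (∀ α, α < κ.ord → #{x : T | htOf lt x = α} < κ)

/-!
Given a regressive `f` whose fibres are covered by few antichains, colour `x` by a code of the pair
`(f x, A)`, where `A` is an antichain of the cover of `f ⁻¹' {f x}` that contains `x`. Fewer than
`κ` codes belong to each level, so `ht x` bounds the code of `x` as soon as `ht x` lies in a certain
club of closure points; equal colours force two points into one antichain.

Conversely, given a good colouring `c` on `T ↾ D`, send `x` to its predecessor of height `c x` if
`ht x ∈ D`, and of height `sup (D ∩ ht x)` otherwise. In a fibre, the points of the first kind have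
equal colours, hence form an antichain, and those of the second kind lie below a fixed `γ ∈ D`,
hence are covered by `γ` levels.
-/

/-- The nonzero ordinals below `o` that are closed under `g`. They are used to find a club of
heights at which a bookkeeping function does not overshoot. -/
def closurePoints (g : Ordinal.{u} → Ordinal.{u}) (o : Ordinal.{u}) : Set Ordinal.{u} :=
  {δ | δ < o ∧ 0 < δ ∧ ∀ β < δ, g β < δ}

theorem mk_Iio_lt_lift {κ : Cardinal.{u}} {α : Ordinal.{u}} (hα : α < κ.ord) :
    #(Iio α) < Cardinal.lift.{u + 1} κ := by
  rw [Cardinal.mk_Iio_ordinal, Cardinal.lift_lt]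
  exact lt_ord.1 hα

theorem iSup_Iio_add_one_lt_ord {κ : Cardinal.{u}} (hreg : κ.IsRegular)
    {g : Ordinal.{u} → Ordinal.{u}} (hg : ∀ β < κ.ord, g β < κ.ord) {α : Ordinal.{u}}
    (hα : α < κ.ord) : ⨆ β : Iio α, (g β + 1) < κ.ord := by
  refine Ordinal.lift_iSup_add_one_lt_of_lt_cof ?_ fun β => hg β (β.2.trans hα)
  simpa [hreg.lift.cof_ord] using mk_Iio_lt_lift hα

theorem exists_mem_closurePoints_gt {κ : Cardinal.{u}} (hreg : κ.IsRegular) (hunc : ℵ₀ < κ)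
    {g : Ordinal.{u} → Ordinal.{u}} (hg : ∀ β < κ.ord, g β < κ.ord) {α : Ordinal.{u}}
    (hα : α < κ.ord) : ∃ δ ∈ closurePoints g κ.ord, α < δ := by
  -- `g` need not be monotone, so each step must exceed all the earlier values of `g`.
  let G : Ordinal.{u} → Ordinal.{u} := fun β => ⨆ ξ : Iio β, (g ξ + 1)
  have hδκ : nfp G (α + 1) < κ.ord :=
    nfp_lt_ord_of_isRegular hreg hunc.ne' (fun _ hβ => iSup_Iio_add_one_lt_ord hreg hg hβ)
      ((isSuccLimit_ord hreg.aleph0_le).add_one_lt hα)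
  have hαδ : α < nfp G (α + 1) := (lt_add_one α).trans_le (le_nfp G _)
  refine ⟨nfp G (α + 1), ⟨hδκ, zero_le.trans_lt hαδ, fun β hβ => ?_⟩, hαδ⟩
  obtain ⟨n, hn⟩ := lt_nfp_iff.1 hβ
  calc g β < g β + 1 := lt_add_one _
    _ ≤ G (G^[n] (α + 1)) :=
      Ordinal.le_iSup (fun ξ : Iio (G^[n] (α + 1)) => g ξ + 1) ⟨β, hn⟩
    _ = G^[n + 1] (α + 1) := (Function.iterate_succ_apply' G n _).symm
    _ ≤ nfp G (α + 1) := iterate_le_nfp G _ _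

theorem isClubIn_closurePoints {κ : Cardinal.{0}} (hreg : κ.IsRegular) (hunc : ℵ₀ < κ)
    {g : Ordinal.{0} → Ordinal.{0}} (hg : ∀ β < κ.ord, g β < κ.ord) :
    IsClubIn (closurePoints g κ.ord) κ.ord := by
  refine ⟨fun δ hδ => hδ.1, fun ε hεκ hε hsup => ⟨hεκ, hε, fun β hβ => ?_⟩,
    fun α hα => exists_mem_closurePoints_gt hreg hunc hg hα⟩
  obtain ⟨δ, ⟨⟨-, -, hδ⟩, hδε⟩, hβδ⟩ := exists_lt_of_lt_csSup' (hsup.symm ▸ hβ)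
  exact (hδ β hβδ).trans hδε

theorem IsClubIn.sSup_inter_Iio_lt {D : Set Ordinal.{0}} {o ε : Ordinal.{0}} (hD : IsClubIn D o)
    (hεo : ε < o) (hε : 0 < ε) (hεD : ε ∉ D) : sSup (D ∩ Iio ε) < ε :=
  (csSup_le' fun _ hδ => hδ.2.le).lt_of_ne fun heq => hεD (hD.2.1 ε hεo hε heq)

theorem lt_of_sSup_inter_Iio_lt {D : Set Ordinal.{u}} {γ ε : Ordinal.{u}} (hγ : γ ∈ D)
    (hε : ε ∉ D) (hlt : sSup (D ∩ Iio ε) < γ) : ε < γ := by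
  refine lt_of_le_of_ne (not_lt.1 fun hγε => hlt.not_ge ?_) fun heq => hε (heq ▸ hγ)
  exact le_csSup ⟨ε, fun _ hδ => hδ.2.le⟩ ⟨hγ, hγε⟩

theorem exists_injective_lt_ord {κ : Cardinal.{u}} (hκ : ℵ₀ ≤ κ) {W : Type u}
    {rank : W → Ordinal.{u}} (hrank : ∀ w, rank w < κ.ord)
    (hfibre : ∀ α < κ.ord, #{w | rank w = α} ≤ κ) :
    ∃ e : W → Ordinal.{u}, Function.Injective e ∧ ∀ w, e w < κ.ord := by
  let r : W → κ.ord.ToType := fun w => ToType.mk ⟨rank w, hrank w⟩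
  have hr (i : κ.ord.ToType) : #(r ⁻¹' {i}) ≤ κ := by
    refine le_trans (mk_le_mk_of_subset fun w hw => ?_)
      (hfibre (ToType.mk.symm i) (ToType.mk.symm i).2)
    simp [← mem_singleton_iff.1 hw, r]
  have hcard : #W ≤ #κ.ord.ToType :=
    calc #W ≤ #κ.ord.ToType * κ := mk_le_mk_mul_of_mk_preimage_le r hr
      _ = #κ.ord.ToType := by simp [mul_eq_self hκ]
  obtain ⟨g⟩ := hcard
  refine ⟨fun w => (ToType.mk.symm (g w)).1, fun v w hvw => ?_, fun w => (ToType.mk.symm (g w)).2⟩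
  exact g.injective (ToType.mk.symm.injective (Subtype.ext hvw))

theorem exists_isClubIn_forall_rank_lt {κ : Cardinal.{0}} (hreg : κ.IsRegular) (hunc : ℵ₀ < κ)
    {W : Type} {rank e : W → Ordinal.{0}} (hfibre : ∀ α < κ.ord, #{w | rank w = α} < κ)
    (he : ∀ w, e w < κ.ord) :
    ∃ D, IsClubIn D κ.ord ∧ ∀ δ ∈ D, 0 < δ ∧ ∀ w, rank w < δ → e w < δ := by
  let g : Ordinal.{0} → Ordinal.{0} := fun β => ⨆ w : {w | rank w = β}, e w
  have hg : ∀ β < κ.ord, g β < κ.ord := fun β hβ =>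
    Ordinal.iSup_lt_of_lt_cof (by simpa only [hreg.cof_ord] using hfibre β hβ) fun w => he w
  refine ⟨closurePoints g κ.ord, isClubIn_closurePoints hreg hunc hg,
    fun δ hδ => ⟨hδ.2.1, fun w hw => ?_⟩⟩
  calc e w ≤ g (rank w) := Ordinal.le_iSup (fun v : {v | rank v = rank w} => e v) ⟨w, rfl⟩
    _ < δ := hδ.2.2 _ hw

theorem mk_sigma_fst_mem_lt {κ : Cardinal.{u}} (hreg : κ.IsRegular) {ι : Type u}
    {β : ι → Type u} {s : Set ι} (hs : #s < κ) (hβ : ∀ i ∈ s, #(β i) < κ) :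
    #{w : Σ i, β i | w.1 ∈ s} < κ :=
  calc #{w : Σ i, β i | w.1 ∈ s}
      = Cardinal.sum fun i : s => #(β i) :=
        (mk_congr (Equiv.subtypeSigmaEquiv β (· ∈ s))).trans (mk_sigma _)
    _ < κ := sum_lt_of_isRegular hreg hs fun i => hβ i i.2

theorem mk_image_Iio_lt {κ : Cardinal.{u}} {γ : Ordinal.{u}} (hγ : γ < κ.ord) {α : Type u}
    (F : Ordinal.{u} → α) : #(F '' Iio γ) < κ := by
  rw [← Cardinal.lift_lt.{u, u + 1}]
  calc Cardinal.lift.{u + 1} #(F '' Iio γ) ≤ Cardinal.lift.{u} #(Iio γ) := mk_image_le_lift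
    _ = #(Iio γ) := Cardinal.lift_id'.{u, u + 1} _
    _ < Cardinal.lift.{u + 1} κ := mk_Iio_lt_lift hγ

theorem antichainIn_of_forall_not_lt {T : Type u} {lt : T → T → Prop} {A : Set T}
    (h : ∀ a ∈ A, ∀ b ∈ A, ¬ lt a b) : antichainIn lt A :=
  fun a ha b hb _ => ⟨h a ha b hb, h b hb a ha⟩

/-- A set-theoretic tree, of any height and with levels of any size. Irreflexivity of `lt` is
encoded in `wellOrderedOn`, by minimal elements of singletons. -/
structure IsTreeOrder {T : Type u} (lt : T → T → Prop) : Prop where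
  trans : ∀ x y z : T, lt x y → lt y z → lt x z
  wellOrderedOn : ∀ x : T, wellOrderedOn {y | lt y x} lt

/-- A colouring of the points with height in `D` that is regressive on heights and injective on
chains; the values of `c` at the other points are irrelevant. -/
structure IsGoodColouring {T : Type} (lt : T → T → Prop) (D : Set Ordinal.{0})
    (c : T → Ordinal.{0}) : Prop where
  lt_htOf : ∀ x : T, htOf lt x ∈ D → c x < htOf lt x
  ne_of_lt : ∀ x y : T, htOf lt x ∈ D → htOf lt y ∈ D → lt x y → c x ≠ c y

namespace IsTreeOrder

theorem isWellOrder {T : Type u} {lt : T → T → Prop} (tree : IsTreeOrder lt) (x : T) :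
    IsWellOrder {y // lt y x} (fun a b => lt a.1 b.1) where
  wf := by
    refine WellFounded.wellFounded_iff_has_min.2 fun s hs => ?_
    obtain ⟨_, ⟨m, hm, rfl⟩, hmin⟩ := (tree.wellOrderedOn x).2 (Subtype.val '' s)
      (by rintro _ ⟨y, -, rfl⟩; exact y.2) (hs.image _)
    exact ⟨m, hm, fun b hb => hmin _ ⟨b, hb, rfl⟩⟩
  trichotomous a b hab hba :=
    Subtype.ext (((tree.wellOrderedOn x).1 a a.2 b b.2).resolve_left hab |>.resolve_right hba)

variable {T : Type} {lt : T → T → Prop} {κ : Cardinal.{0}}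

theorem htOf_eq_type (tree : IsTreeOrder lt) (x : T) :
    htOf lt x = @Ordinal.type _ _ (tree.isWellOrder x) :=
  dif_pos (tree.isWellOrder x)

theorem htOf_eq_typein (tree : IsTreeOrder lt) {x : T} (y : {y // lt y x}) :
    htOf lt y.1 = @Ordinal.typein _ (fun a b : {y // lt y x} => lt a.1 b.1)
      (tree.isWellOrder x) y := by
  have := tree.isWellOrder x
  have := tree.isWellOrder y.1
  rw [tree.htOf_eq_type, ← Ordinal.type_subrel]
  exact RelIso.ordinalType_congr
    { toFun := fun z => ⟨⟨z.1, tree.trans _ _ _ z.2 y.2⟩, z.2⟩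
      invFun := fun z => ⟨z.1.1, z.2⟩
      map_rel_iff' := Iff.rfl }

theorem htOf_lt_htOf (tree : IsTreeOrder lt) {x y : T} (hxy : lt x y) :
    htOf lt x < htOf lt y := by
  have := tree.isWellOrder y
  rw [tree.htOf_eq_typein ⟨x, hxy⟩, tree.htOf_eq_type y]
  exact Ordinal.typein_lt_type _ _

theorem exists_lt_htOf_eq (tree : IsTreeOrder lt) {x : T} {α : Ordinal.{0}}
    (hα : α < htOf lt x) : ∃ y, lt y x ∧ htOf lt y = α := by
  have := tree.isWellOrder x
  rw [tree.htOf_eq_type x] at hα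
  obtain ⟨y, hy⟩ := Ordinal.typein_surj _ hα
  exact ⟨y, y.2, (tree.htOf_eq_typein y).trans hy⟩

theorem exists_map_htOf_eq (tree : IsTreeOrder lt) {a : T → Ordinal.{0}}
    (ha : ∀ x, a x ≤ htOf lt x) :
    ∃ f : T → T, (∀ x, htOf lt (f x) = a x) ∧ ∀ x, a x < htOf lt x → lt (f x) x := by
  have hex (x : T) : ∃ z, htOf lt z = a x ∧ (a x < htOf lt x → lt z x) := by
    rcases (ha x).lt_or_eq with hlt | heq
    · obtain ⟨z, hzx, hz⟩ := tree.exists_lt_htOf_eq hlt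
      exact ⟨z, hz, fun _ => hzx⟩
    · exact ⟨x, heq.symm, fun hlt => absurd heq hlt.ne⟩
  choose f hf_ht hf_lt using hex
  exact ⟨f, hf_ht, hf_lt⟩

theorem antichainIn_level (tree : IsTreeOrder lt) (α : Ordinal.{0}) :
    antichainIn lt {x | htOf lt x = α} :=
  antichainIn_of_forall_not_lt fun _ hx _ hy hxy =>
    (tree.htOf_lt_htOf hxy).ne (hx.trans hy.symm)

theorem exists_isGoodColouring_of_specialOn (tree : IsTreeOrder lt) (hreg : κ.IsRegular)
    (hunc : ℵ₀ < κ) (hht : ∀ x, htOf lt x < κ.ord)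
    (hlevel : ∀ α < κ.ord, #{x | htOf lt x = α} < κ) (hspecial : SpecialOn κ univ lt) :
    ∃ D, IsClubIn D κ.ord ∧ ∃ c, IsGoodColouring lt D c := by
  obtain ⟨f, hf, hcover⟩ := hspecial
  choose 𝒜 hcard hanti hcover using hcover
  choose A hA𝒜 hxA using fun x => hcover (f x) ⟨mem_univ x, rfl⟩
  let rank : (Σ z, 𝒜 z) → Ordinal.{0} := fun w => htOf lt w.1
  have hrank (w) : rank w < κ.ord := hht w.1
  have hfibre (α) (hα : α < κ.ord) : #{w | rank w = α} < κ :=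
    mk_sigma_fst_mem_lt hreg (hlevel α hα) fun z _ => by simpa only [Cardinal.lift_id] using hcard z
  obtain ⟨e, he_inj, heκ⟩ :=
    exists_injective_lt_ord hreg.aleph0_le hrank fun α hα => (hfibre α hα).le
  obtain ⟨D, hD, hDe⟩ := exists_isClubIn_forall_rank_lt hreg hunc hfibre heκ
  refine ⟨D, hD, fun x => e ⟨f x, A x, hA𝒜 x⟩, fun x hx => ?_, fun x y _ _ hxy hcolour => ?_⟩
  · obtain ⟨hpos, hclosed⟩ := hDe _ hx
    obtain ⟨y, hyx, -⟩ := tree.exists_lt_htOf_eq hpos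
    exact hclosed _ (tree.htOf_lt_htOf ((hf x (mem_univ x)).2 ⟨y, mem_univ y, hyx⟩))
  · have hAxy : A x = A y :=
      congrArg (fun w : Σ z, 𝒜 z => w.2.1) (he_inj hcolour)
    have hne : x ≠ y := fun h => (tree.htOf_lt_htOf hxy).ne (h ▸ rfl)
    exact ((hanti _ _ (hA𝒜 y)).2 x (hAxy ▸ hxA x) y (hxA y) hne).1 hxy

theorem exists_antichains_cover (tree : IsTreeOrder lt) (hκ : ℵ₀ ≤ κ) {γ : Ordinal.{0}}
    (hγ : γ < κ.ord) {A : Set T} (hA : antichainIn lt A) :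
    ∃ 𝒜 : Set (Set T), #𝒜 < κ ∧ (∀ B ∈ 𝒜, antichainIn lt B) ∧
      A ∪ {x | htOf lt x < γ} ⊆ ⋃₀ 𝒜 := by
  refine ⟨insert A ((fun β => {x | htOf lt x = β}) '' Iio γ), ?_, ?_, ?_⟩
  · exact mk_insert_le.trans_lt
      (add_lt_of_lt hκ (mk_image_Iio_lt hγ _) (one_lt_aleph0.trans_le hκ))
  · rintro B (rfl | ⟨β, -, rfl⟩)
    · exact hA
    · exact tree.antichainIn_level β
  · rintro x (hx | hx)
    · exact ⟨A, mem_insert _ _, hx⟩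
    · exact ⟨_, mem_insert_of_mem _ (mem_image_of_mem _ hx), rfl⟩

end IsTreeOrder

open Classical in
/-- The height of the predecessor to which the regressive map built from the colouring `c` on `D`
sends `x`. -/
def regressiveHeight {T : Type} (lt : T → T → Prop) (D : Set Ordinal.{0}) (c : T → Ordinal.{0})
    (x : T) : Ordinal.{0} :=
  if htOf lt x ∈ D then c x else sSup (D ∩ Iio (htOf lt x))

theorem colour_eq_regressiveHeight_or_htOf_lt {T : Type} {lt : T → T → Prop} {D : Set Ordinal.{0}}
    {c : T → Ordinal.{0}} {x : T} {γ : Ordinal.{0}} (hγ : γ ∈ D)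
    (hlt : regressiveHeight lt D c x < γ) :
    (htOf lt x ∈ D ∧ c x = regressiveHeight lt D c x) ∨ htOf lt x < γ := by
  unfold regressiveHeight at hlt ⊢
  split_ifs at hlt ⊢ with hxD
  · exact .inl ⟨hxD, rfl⟩
  · exact .inr (lt_of_sSup_inter_Iio_lt hγ hxD hlt)

namespace IsGoodColouring

variable {T : Type} {lt : T → T → Prop} {κ : Cardinal.{0}} {D : Set Ordinal.{0}}
  {c : T → Ordinal.{0}}

theorem antichainIn_colour (hc : IsGoodColouring lt D c) (α : Ordinal.{0}) :
    antichainIn lt {x | htOf lt x ∈ D ∧ c x = α} :=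
  antichainIn_of_forall_not_lt fun x hx y hy hxy =>
    hc.ne_of_lt x y hx.1 hy.1 hxy (hx.2.trans hy.2.symm)

theorem regressiveHeight_le (hc : IsGoodColouring lt D c) (x : T) :
    regressiveHeight lt D c x ≤ htOf lt x := by
  unfold regressiveHeight
  split_ifs with hxD
  · exact (hc.lt_htOf x hxD).le
  · exact csSup_le' fun _ hδ => hδ.2.le

theorem regressiveHeight_lt (hc : IsGoodColouring lt D c) {o : Ordinal.{0}} (hD : IsClubIn D o)
    {x : T} (hxo : htOf lt x < o) (hx : 0 < htOf lt x) :
    regressiveHeight lt D c x < htOf lt x := by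
  unfold regressiveHeight
  split_ifs with hxD
  · exact hc.lt_htOf x hxD
  · exact hD.sSup_inter_Iio_lt hxo hx hxD

theorem specialOn (hc : IsGoodColouring lt D c) (tree : IsTreeOrder lt) (hκ : ℵ₀ ≤ κ)
    (hht : ∀ x, htOf lt x < κ.ord) (hD : IsClubIn D κ.ord) : SpecialOn κ univ lt := by
  obtain ⟨f, hf_ht, hf_lt⟩ := tree.exists_map_htOf_eq hc.regressiveHeight_le
  refine ⟨f, fun x _ => ⟨mem_univ _, ?_⟩, fun z => ?_⟩
  · rintro ⟨y, -, hyx⟩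
    have hx : 0 < htOf lt x := zero_le.trans_lt (tree.htOf_lt_htOf hyx)
    exact hf_lt x (hc.regressiveHeight_lt hD (hht x) hx)
  · obtain ⟨γ, hγD, hzγ⟩ := hD.2.2 (htOf lt z) (hht z)
    obtain ⟨𝒜, hcard, hanti, hcover⟩ :=
      tree.exists_antichains_cover hκ (hD.1 hγD) (hc.antichainIn_colour (htOf lt z))
    refine ⟨𝒜, by rwa [Cardinal.lift_id], fun A hA => ⟨subset_univ A, hanti A hA⟩, ?_⟩
    rintro x ⟨-, rfl⟩
    rw [hf_ht x] at hzγ hcover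
    exact hcover (colour_eq_regressiveHeight_or_htOf_lt hγD hzγ)

end IsGoodColouring

/-- Lemma 2.6 (folklore): a `κ`-tree is special iff it admits a good colouring,
i.e. an ordinal-valued map `c` on `T ↾ D` for some club `D ⊆ κ` that is regressive
on heights and injective on chains. -/
theorem special_iff_good_colouring (κ : Cardinal.{0}) (hreg : κ.IsRegular)
    (hunc : ℵ₀ < κ) (T : Type) (lt : T → T → Prop) (htree : IsKTree κ lt) :
    SpecialOn κ (Set.univ : Set T) lt ↔
      ∃ D : Set Ordinal.{0}, IsClubIn D κ.ord ∧
        ∃ c : T → Ordinal.{0},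
          (∀ x : T, htOf lt x ∈ D → c x < htOf lt x) ∧
          (∀ x y : T, htOf lt x ∈ D → htOf lt y ∈ D → lt x y → c x ≠ c y) := by
  obtain ⟨htrans, -, hwo, hht, -, hlevel⟩ := htree
  have tree : IsTreeOrder lt := ⟨htrans, hwo⟩
  constructor
  · intro hspecial
    obtain ⟨D, hD, c, hc⟩ :=
      tree.exists_isGoodColouring_of_specialOn hreg hunc hht hlevel hspecial
    exact ⟨D, hD, c, hc.lt_htOf, hc.ne_of_lt⟩
  · rintro ⟨D, hD, c, hlt, hne⟩
    have hc : IsGoodColouring lt D c := ⟨hlt, hne⟩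
    exact hc.specialOn tree hreg.aleph0_le hht hD

end
end

section
/- Let μ be an infinite cardinal. Let T be a streamlined μ⁺-tree (of functions into an arbitrary set X) that is E^{μ⁺}_{cf(μ)}-coherent. Suppose D ⊆ μ⁺ is a club, Δ := D ∩ E^{μ⁺}_{cf(μ)}, for each δ ∈ Δ a node b_δ ∈ T_δ is given, and d : {b_δ | δ ∈ Δ} → μ⁺ is a function such that d(b_δ) < δ for every δ ∈ Δ and d(b_γ) ≠ d(b_δ) whenever b_γ ⊊ b_δ (d is injective on chains). Then T is special. -/
open Set Cardinal Ordinal Order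

noncomputable section

universe u

/-- Nodes of streamlined trees: partial functions on ordinals, encoded with `Option`. -/
abbrev PFn (X : Type u) := Ordinal.{0} → Option X

/-- Inclusion of partial functions. -/
def pLE {X : Type u} (s t : PFn X) : Prop := ∀ α x, s α = some x → t α = some x

/-- Strict inclusion of partial functions; the tree ordering of streamlined trees. -/
def pLT {X : Type u} (s t : PFn X) : Prop := pLE s t ∧ s ≠ t

/-- The domain (= height) of a node of a streamlined tree. -/
def pDom {X : Type u} (t : PFn X) : Ordinal.{0} := sInf {γ | t γ = none}

/-- Restriction of a node to a level. -/
def pRestrict {X : Type u} (t : PFn X) (γ : Ordinal.{0}) : PFn X :=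
  fun α => if α < γ then t α else none

/-- The node obtained from a total function by restricting it to `Iio γ`. -/
def ofFun {X : Type u} (f : Ordinal.{0} → X) (γ : Ordinal.{0}) : PFn X :=
  fun α => if α < γ then some (f α) else none

/-- `Δ(s,t)`: the least point where `s` and `t` differ. -/
def pDelta {X : Type u} (s t : PFn X) : Ordinal.{0} := sInf {δ | s δ ≠ t δ}

/-- The meet `s ∧ t` of two nodes of a streamlined tree. -/
def pMeet {X : Type u} (s t : PFn X) : PFn X := pRestrict s (pDelta s t)

/-- `S` is a streamlined `κ`-tree: nodes are functions whose domain is a proper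
initial segment of `κ`, `S` is closed under restrictions, all levels below `κ` are
nonempty, and all levels have size less than `κ`. -/
def StreamKTree {X : Type u} (κ : Cardinal.{0}) (S : Set (PFn X)) : Prop :=
  (∀ t ∈ S, ∀ α : Ordinal.{0}, (t α).isSome ↔ α < pDom t) ∧
  (∀ t ∈ S, ∀ γ : Ordinal.{0}, pRestrict t γ ∈ S) ∧
  (∀ t ∈ S, pDom t < κ.ord) ∧
  (∀ γ, γ < κ.ord → ∃ t ∈ S, pDom t = γ) ∧
  (∀ γ, γ < κ.ord → #{t ∈ S | pDom t = γ} < Cardinal.lift.{max 1 u} κ)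

/-- A streamlined `κ`-Aronszajn tree: a streamlined `κ`-tree with no chain of size `κ`. -/
def StreamAronszajn {X : Type u} (κ : Cardinal.{0}) (S : Set (PFn X)) : Prop :=
  StreamKTree κ S ∧ ¬ ∃ c ⊆ S, chainIn pLT c ∧ #c = Cardinal.lift.{max 1 u} κ

/-- `E^κ_θ`: the ordinals below `κ` of cofinality `θ`. -/
def ECof (κ : Ordinal.{0}) (θ : Cardinal.{0}) : Set Ordinal.{0} :=
  {α | α < κ ∧ α.cof = θ}

/-- The streamlined tree `T` is `S`-coherent: any two nodes on a level `δ ∈ S`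
agree from some point below `δ` on. -/
def SCoherent {X : Type u} (S : Set Ordinal.{0}) (T : Set (PFn X)) : Prop :=
  ∀ δ ∈ S, ∀ s ∈ T, ∀ t ∈ T, pDom s = δ → pDom t = δ →
    sSup {γ : Ordinal.{0} | γ < δ ∧ s γ ≠ t γ} < δ

/-!
Suppose each node `x` whose height has cofinality `cf μ` is assigned a pair `(β, i)` with
`β < ht x` and `i < μ` so that comparable nodes receive different pairs. Define a rank `ρ x < μ`
recursively: if `cf (ht x) = cf μ`, it exceeds `i` and the rank of `x ↾ β`; otherwise it exceeds the
ranks of cofinally many restrictions of `x`, which is possible because `cf (ht x) ≠ cf μ`. Below any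
node there are fewer than `μ` nodes of rank at most `l < μ`: those of the first kind inject into
pairs of a node of smaller rank and an index below `l`, those of the second kind are separated by
nodes of smaller rank. Hence `x` is determined along chains by `ρ x` and the order type of the
levels `ξ < ht x` with `ρ (x ↾ ξ) ≤ ρ x`, and the tree is a union of `μ` antichains.

The required pairs come from the club: if `δ := ht x ∉ D`, let `β := sup (D ∩ δ)` and let `i` code
`δ`, which lies between `β` and the next point of `D`. If `δ ∈ D`, let `β` be a bound for `d (b δ)`
and for the disagreement of `x` with `b δ`, and let `i` code `d (b δ)` together with `b δ ↾ β`.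
-/

universe v

section Orders

theorem exists_isCofinal_preimage_Iic {I J : Type u} [LinearOrder I] [LinearOrder J] (m : I → J)
    (h : Order.cof I ≠ Order.cof J) : ∃ M, IsCofinal (m ⁻¹' Iic M) := by
  rcases lt_or_gt_of_ne h with hIJ | hJI
  · obtain ⟨C, hC, hC_card⟩ := Order.exists_cof_eq (α := I)
    have h_image : ¬ IsCofinal (m '' C) := fun hcof ↦
      ((Order.cof_le hcof).trans (mk_image_le.trans hC_card.le)).not_gt hIJ
    obtain ⟨M, hM⟩ := not_isCofinal_iff.1 h_image
    exact ⟨M, hC.mono fun ξ hξ ↦ (hM _ (mem_image_of_mem m hξ)).le⟩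
  · obtain ⟨C, hC, hC_card⟩ := Order.exists_cof_eq (α := J)
    have h_union : ⋃ j : C, m ⁻¹' Iic (j : J) = Set.univ := by
      refine eq_univ_of_forall fun ξ ↦ ?_
      obtain ⟨j, hj, hle⟩ := hC (m ξ)
      exact mem_iUnion.2 ⟨⟨j, hj⟩, hle⟩
    obtain ⟨j, hj⟩ := isCofinal_of_isCofinal_iUnion (h_union ▸ IsCofinal.univ)
      (hC_card.trans_lt hJI)
    exact ⟨j, hj⟩

theorem exists_bound_cofinally_of_cof_ne {α β : Ordinal.{u}} (h : α.cof ≠ β.cof)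
    {m : Ordinal.{u} → Ordinal.{u}} (hm : ∀ ξ < α, m ξ < β) :
    ∃ M < β, ∀ η < α, ∃ ζ : Ico η α, m ζ ≤ M := by
  have h_cof : Order.cof (Iio α) ≠ Order.cof (Iio β) := by
    simpa only [Ordinal.cof_Iio, ← Ordinal.lift_cof, ne_eq, Cardinal.lift_inj] using h
  obtain ⟨⟨M, hM⟩, hcof⟩ := exists_isCofinal_preimage_Iic
    (fun ξ : Iio α ↦ (⟨m ξ, hm ξ ξ.2⟩ : Iio β)) h_cof
  refine ⟨M, hM, fun η hη ↦ ?_⟩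
  obtain ⟨ζ, hζM, hηζ⟩ := hcof ⟨η, hη⟩
  exact ⟨⟨ζ, hηζ, ζ.2⟩, hζM⟩

theorem isSuccLimit_of_cof_eq {α β : Ordinal.{u}} (hβ : IsSuccLimit β) (h : α.cof = β.cof) :
    IsSuccLimit α := by
  rwa [← Ordinal.one_lt_cof_iff, h, Ordinal.one_lt_cof_iff]

theorem type_inter_Iio_lt_type {I : Type u} [LinearOrder I] [WellFoundedLT I] {A : Set I} {a : I}
    (ha : a ∈ A) :
    Ordinal.type (α := (A ∩ Iio a : Set I)) (· < ·) < Ordinal.type (α := A) (· < ·) := by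
  let f : ((· < ·) : (A ∩ Iio a : Set I) → (A ∩ Iio a : Set I) → Prop) ↪r
      ((· < ·) : Iio (⟨a, ha⟩ : A) → Iio (⟨a, ha⟩ : A) → Prop) :=
    ⟨⟨fun p ↦ ⟨⟨p, p.2.1⟩, p.2.2⟩, fun p q hpq ↦ by simpa [Subtype.ext_iff] using hpq⟩, Iff.rfl⟩
  exact f.ordinal_type_le.trans_lt (Ordinal.typein_lt_type (· < ·) (⟨a, ha⟩ : A))

theorem exists_injOn_mapsTo_Iio_ord {C : Type u} {Z : Set C} {μ : Cardinal.{v}}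
    (hZ : Cardinal.lift.{v} #Z ≤ Cardinal.lift.{u} μ) :
    ∃ e : C → Ordinal.{v}, MapsTo e Z (Iio μ.ord) ∧ InjOn e Z := by
  have h_card : Cardinal.lift.{v + 1} #Z ≤ Cardinal.lift.{u} #(Iio μ.ord) := by
    rw [Cardinal.mk_Iio_ordinal, Cardinal.card_ord, Cardinal.lift_lift]
    simpa only [Cardinal.lift_lift] using Cardinal.lift_le.{v + 1}.2 hZ
  obtain ⟨f⟩ := Cardinal.lift_mk_le'.1 h_card
  let e : C → Ordinal.{v} := Function.extend Subtype.val (fun z : Z ↦ (f z : Ordinal.{v})) 0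
  have he (z : Z) : e z = f z := Subtype.val_injective.extend_apply _ _ z
  refine ⟨e, fun z hz ↦ ?_, fun y hy z hz hyz ↦ ?_⟩
  · exact (he ⟨z, hz⟩).symm ▸ (f ⟨z, hz⟩).2
  · rw [he ⟨y, hy⟩, he ⟨z, hz⟩] at hyz
    exact congrArg Subtype.val (f.injective (Subtype.ext hyz))

end Orders

section Counting

theorem mk_le_add_one_of_separated {I : Type u} [LinearOrder I] [WellFoundedLT I] {S L : Set I}
    (h : ∀ η ∈ S, ∀ ξ ∈ S, η < ξ → (L ∩ Ico η ξ).Nonempty) : #S ≤ #L + 1 := by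
  classical
  let next : S → Option L := fun η ↦
    if hη : (L ∩ Ici η.1).Nonempty then
      some ⟨wellFounded_lt.min _ hη, (wellFounded_lt.min_mem _ hη).1⟩
    else none
  have next_ne (η ξ : S) (hηξ : η < ξ) : next η ≠ next ξ := by
    intro heq
    obtain ⟨ζ, hζL, hηζ, hζξ⟩ := h η η.2 ξ ξ.2 hηξ
    have hη : (L ∩ Ici η.1).Nonempty := ⟨ζ, hζL, hηζ⟩
    simp only [next, dif_pos hη] at heq
    split_ifs at heq with hξ
    have h_min := congrArg Subtype.val (Option.some.inj heq)
    have h_le : wellFounded_lt.min _ hη ≤ ζ :=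
      wellFounded_lt.min_le (show ζ ∈ L ∩ Ici η.1 from ⟨hζL, hηζ⟩)
    have h_ge : ξ.1 ≤ wellFounded_lt.min _ hξ := (wellFounded_lt.min_mem _ hξ).2
    exact (h_ge.trans (h_min.symm.le.trans h_le)).not_gt hζξ
  rw [← Cardinal.mk_option]
  exact Cardinal.mk_le_of_injective (Function.Injective.of_lt_imp_ne next_ne)

variable {I P : Type u} [LinearOrder I] [WellFoundedLT I] [LinearOrder P]
  {U S : Set I} {ρ : I → P} {g : I → I × P}

theorem mk_rank_le_le (h_inj : InjOn g (U ∩ S))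
    (h_code : ∀ ξ ∈ U ∩ S, (g ξ).1 ∈ U ∧ ρ (g ξ).1 < ρ ξ ∧ (g ξ).2 < ρ ξ)
    (h_lim : ∀ ξ ∈ U \ S, ∀ η < ξ, ∃ ζ ∈ U, ζ ∈ Ico η ξ ∧ ρ ζ < ρ ξ) (l : P) :
    #{ξ ∈ U | ρ ξ ≤ l} ≤
      #{ξ ∈ U | ρ ξ < l} * #(Iio l) + (#{ξ ∈ U | ρ ξ < l} + 1) := by
  set L := {ξ ∈ U | ρ ξ < l}
  have h_coded : #{ξ ∈ U ∩ S | ρ ξ ≤ l} ≤ #L * #(Iio l) := by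
    rw [← Cardinal.mk_image_eq_of_injOn g _ (h_inj.mono fun ξ hξ ↦ hξ.1), ← Cardinal.mk_setProd]
    refine Cardinal.mk_le_mk_of_subset ?_
    rintro _ ⟨ξ, ⟨hξ, hl⟩, rfl⟩
    obtain ⟨hU, hρ, hi⟩ := h_code ξ hξ
    exact ⟨⟨hU, hρ.trans_le hl⟩, hi.trans_le hl⟩
  have h_separated : #{ξ ∈ U \ S | ρ ξ ≤ l} ≤ #L + 1 := by
    refine mk_le_add_one_of_separated fun η _ ξ ⟨hξ, hl⟩ hηξ ↦ ?_
    obtain ⟨ζ, hζU, hζ, hρ⟩ := h_lim ξ hξ η hηξ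
    exact ⟨ζ, ⟨hζU, hρ.trans_le hl⟩, hζ⟩
  have h_split : {ξ ∈ U | ρ ξ ≤ l} ⊆ {ξ ∈ U ∩ S | ρ ξ ≤ l} ∪ {ξ ∈ U \ S | ρ ξ ≤ l} := by
    rintro ξ ⟨hU, hl⟩
    by_cases hS : ξ ∈ S
    exacts [.inl ⟨⟨hU, hS⟩, hl⟩, .inr ⟨⟨hU, hS⟩, hl⟩]
  exact (Cardinal.mk_le_mk_of_subset h_split).trans
    ((Cardinal.mk_union_le _ _).trans (add_le_add h_coded h_separated))

variable [WellFoundedLT P]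

theorem mk_rank_lt_lt_of_isRegular (h_inj : InjOn g (U ∩ S))
    (h_code : ∀ ξ ∈ U ∩ S, (g ξ).1 ∈ U ∧ ρ (g ξ).1 < ρ ξ ∧ (g ξ).2 < ρ ξ)
    (h_lim : ∀ ξ ∈ U \ S, ∀ η < ξ, ∃ ζ ∈ U, ζ ∈ Ico η ξ ∧ ρ ζ < ρ ξ)
    {c : Cardinal.{u}} (hc : c.IsRegular) (l : P) (hl : #(Iio l) < c) :
    #{ξ ∈ U | ρ ξ < l} < c := by
  induction l using WellFoundedLT.induction with
  | ind l ih =>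
  have h_union : {ξ ∈ U | ρ ξ < l} ⊆ ⋃ k ∈ Iio l, {ξ ∈ U | ρ ξ ≤ k} := fun ξ ⟨hU, hξ⟩ ↦
    mem_biUnion (show ρ ξ ∈ Iio l from hξ) ⟨hU, le_rfl⟩
  refine (Cardinal.mk_le_mk_of_subset h_union).trans_lt
    ((card_biUnion_lt_iff_forall_of_isRegular hc hl).2 fun k hk ↦ ?_)
  have hk_card : #(Iio k) < c :=
    (Cardinal.mk_le_mk_of_subset (Iio_subset_Iio (le_of_lt hk))).trans_lt hl
  have hc₀ := hc.aleph0_le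
  have hL := ih k hk hk_card
  exact (mk_rank_le_le h_inj h_code h_lim k).trans_lt
    (Cardinal.add_lt_of_lt hc₀ (Cardinal.mul_lt_of_lt hc₀ hL hk_card)
      (Cardinal.add_lt_of_lt hc₀ hL (one_lt_aleph0.trans_le hc₀)))

theorem isRegular_max_aleph0_succ (a : Cardinal.{u}) : (max ℵ₀ (Order.succ a)).IsRegular := by
  rcases lt_or_ge a ℵ₀ with ha | ha
  · rw [max_eq_left (Order.succ_le_of_lt ha)]
    exact isRegular_aleph0
  · rw [max_eq_right (ha.trans (Order.le_succ a))]
    exact isRegular_succ ha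

theorem mk_rank_lt_lt (h_inj : InjOn g (U ∩ S))
    (h_code : ∀ ξ ∈ U ∩ S, (g ξ).1 ∈ U ∧ ρ (g ξ).1 < ρ ξ ∧ (g ξ).2 < ρ ξ)
    (h_lim : ∀ ξ ∈ U \ S, ∀ η < ξ, ∃ ζ ∈ U, ζ ∈ Ico η ξ ∧ ρ ζ < ρ ξ)
    {ν : Cardinal.{u}} (hν : ℵ₀ ≤ ν) {l : P} (hl : #(Iio l) < ν) :
    #{ξ ∈ U | ρ ξ < l} < ν :=
  (mk_rank_lt_lt_of_isRegular h_inj h_code h_lim (isRegular_max_aleph0_succ #(Iio l)) l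
    (lt_max_of_lt_right (Order.lt_succ _))).trans_le (max_le hν (Order.succ_le_of_lt hl))

end Counting

section Nodes

variable {X : Type u} {x y : PFn X} {α γ : Ordinal.{0}}

/-- `x` is a function on an initial segment of the ordinals, as are the nodes of a streamlined
tree; without this `pDom x` is only the first gap in the domain of `x`. -/
def IsSegment (x : PFn X) : Prop := ∀ α, (x α).isSome ↔ α < pDom x

theorem pRestrict_pRestrict (x : PFn X) (h : α ≤ γ) :
    pRestrict (pRestrict x γ) α = pRestrict x α := by
  funext ζ
  by_cases hζ : ζ < α
  · simp [pRestrict, hζ, hζ.trans_le h]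
  · simp [pRestrict, hζ]

theorem pDom_pRestrict_le (x : PFn X) (γ : Ordinal.{0}) : pDom (pRestrict x γ) ≤ γ :=
  csInf_le' (by simp [pRestrict])

theorem pLE_pRestrict_of_le (x : PFn X) (h : α ≤ γ) : pLE (pRestrict x α) (pRestrict x γ) := by
  intro ζ v
  by_cases hζ : ζ < α
  · simp [pRestrict, hζ, hζ.trans_le h]
  · simp [pRestrict, hζ]

namespace IsSegment

theorem eq_none_of_pDom_le (hx : IsSegment x) (h : pDom x ≤ α) : x α = none := by
  rw [← Option.not_isSome_iff_eq_none, hx α]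
  exact h.not_gt

theorem lt_pDom_of_eq_some (hx : IsSegment x) {v : X} (h : x α = some v) : α < pDom x :=
  (hx α).1 (by simp [h])

theorem pDom_pRestrict (hx : IsSegment x) (h : γ ≤ pDom x) : pDom (pRestrict x γ) = γ := by
  refine (pDom_pRestrict_le x γ).antisymm (le_csInf ⟨γ, by simp [pRestrict]⟩ fun ζ hζ ↦ ?_)
  by_contra! hlt
  obtain ⟨v, hv⟩ := Option.isSome_iff_exists.1 ((hx ζ).2 (hlt.trans_le h))
  simp [pRestrict, hlt, hv] at hζ

theorem pRestrict_eq_of_pLE (hx : IsSegment x) (h : pLE x y) : pRestrict y (pDom x) = x := by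
  funext ζ
  by_cases hζ : ζ < pDom x
  · obtain ⟨v, hv⟩ := Option.isSome_iff_exists.1 ((hx ζ).2 hζ)
    simp [pRestrict, hζ, hv, h ζ v hv]
  · simp [pRestrict, hζ, hx.eq_none_of_pDom_le (not_lt.1 hζ)]

theorem pRestrict_pDom (hx : IsSegment x) : pRestrict x (pDom x) = x :=
  hx.pRestrict_eq_of_pLE fun _ _ ↦ id

theorem pDom_lt_of_pLT (hx : IsSegment x) (hy : IsSegment y) (h : pLT x y) :
    pDom x < pDom y := by
  by_contra! hle
  refine h.2 (funext fun ζ ↦ ?_)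
  rw [← hx.pRestrict_eq_of_pLE h.1]
  by_cases hζ : ζ < pDom x
  · simp [pRestrict, hζ]
  · simp [pRestrict, hζ, hy.eq_none_of_pDom_le (hle.trans (not_lt.1 hζ))]

theorem pRestrict_pLT_pRestrict (hx : IsSegment x) (hαγ : α < γ) (hγ : γ ≤ pDom x) :
    pLT (pRestrict x α) (pRestrict x γ) := by
  refine ⟨pLE_pRestrict_of_le x hαγ.le, fun heq ↦ hαγ.ne ?_⟩
  rw [← hx.pDom_pRestrict (hαγ.le.trans hγ), heq, hx.pDom_pRestrict hγ]

theorem pRestrict_pLT (hx : IsSegment x) (hα : α < pDom x) : pLT (pRestrict x α) x := by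
  simpa only [hx.pRestrict_pDom] using hx.pRestrict_pLT_pRestrict hα le_rfl

theorem pLE_of_eqOn_Ico {s t : PFn X} {β : Ordinal.{0}} (hs : IsSegment s) (hy : IsSegment y)
    (hxy : pLE x y) (h_dom : pDom s = pDom x) (h_below : pRestrict s β = pRestrict t β)
    (hxs : EqOn x s (Ico β (pDom x))) (hyt : EqOn y t (Ico β (pDom y))) : pLE s t := by
  intro ζ v hv
  rcases lt_or_ge ζ β with hζ | hζ
  · simpa [pRestrict, hζ, hv, eq_comm] using congrFun h_below ζ
  · have hx_eq : x ζ = some v := (hxs ⟨hζ, h_dom ▸ hs.lt_pDom_of_eq_some hv⟩).trans hv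
    have hy_eq := hxy ζ v hx_eq
    exact (hyt ⟨hζ, hy.lt_pDom_of_eq_some hy_eq⟩).symm.trans hy_eq

end IsSegment

end Nodes

section Trees

variable {X : Type u} {κ μ : Cardinal.{0}} {T : Set (PFn X)} {x y : PFn X}

namespace StreamKTree

theorem isSegment (hT : StreamKTree κ T) (hx : x ∈ T) : IsSegment x := hT.1 x hx

theorem pRestrict_mem (hT : StreamKTree κ T) (hx : x ∈ T) (γ : Ordinal.{0}) :
    pRestrict x γ ∈ T := hT.2.1 x hx γ

theorem pDom_lt (hT : StreamKTree κ T) (hx : x ∈ T) : pDom x < κ.ord := hT.2.2.1 x hx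

theorem mk_level_prod_Iic_le (hμ : ℵ₀ ≤ μ) (hT : StreamKTree (Order.succ μ) T)
    {β γ : Ordinal.{0}} (hβ : β < (Order.succ μ).ord) (hγ : γ < (Order.succ μ).ord) :
    #({t ∈ T | pDom t = β} ×ˢ Iic γ : Set (PFn X × Ordinal.{0})) ≤ Cardinal.lift.{max 1 u} μ := by
  have h_level : #{t ∈ T | pDom t = β} ≤ Cardinal.lift.{max 1 u} μ := by
    simpa only [Cardinal.lift_succ, Order.lt_succ_iff] using hT.2.2.2.2 β hβ
  have h_Iic : #(Iic γ) ≤ Cardinal.lift.{1} μ := by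
    have hγ_succ := (isSuccLimit_ord (hμ.trans (Order.le_succ μ))).succ_lt hγ
    rw [← Order.Iio_succ, Cardinal.mk_Iio_ordinal, Cardinal.lift_le, ← Order.lt_succ_iff]
    exact Cardinal.lt_ord.1 hγ_succ
  rw [Cardinal.mk_congr (Equiv.Set.prod _ _), Cardinal.mk_prod]
  calc Cardinal.lift.{1} #{t ∈ T | pDom t = β} * Cardinal.lift.{max 1 u} #(Iic γ)
      ≤ Cardinal.lift.{max 1 u} μ * Cardinal.lift.{max 1 u} μ := by
        refine mul_le_mul' ?_ ?_
        · simpa only [Cardinal.lift_lift] using Cardinal.lift_le.{1}.2 h_level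
        · simpa only [Cardinal.lift_lift] using Cardinal.lift_le.{max 1 u}.2 h_Iic
    _ = Cardinal.lift.{max 1 u} μ := Cardinal.mul_eq_self (by simpa using hμ)

theorem specialOn_of_coloring (hT : StreamKTree κ T) {C : Type v}
    (hC : Cardinal.lift.{max 1 u} #C < Cardinal.lift.{max 1 u v} κ) (c : T → C)
    (hc : ∀ x y : T, pLT x.1 y.1 → c x ≠ c y) : SpecialOn κ T pLT := by
  refine ⟨fun x ↦ pRestrict x 0, fun x hx ↦ ⟨hT.pRestrict_mem hx 0, ?_⟩, fun z ↦
    ⟨range fun i ↦ Subtype.val '' (c ⁻¹' {i}), ?_, ?_, ?_⟩⟩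
  · rintro ⟨y, hy, hyx⟩
    exact (hT.isSegment hx).pRestrict_pLT
      (bot_le.trans_lt ((hT.isSegment hy).pDom_lt_of_pLT (hT.isSegment hx) hyx))
  · rw [← Cardinal.lift_lt.{max 1 u, v}, Cardinal.lift_lift]
    exact Cardinal.mk_range_le_lift.trans_lt hC
  · rintro _ ⟨i, rfl⟩
    refine ⟨Subtype.coe_image_subset T _, ?_⟩
    rintro _ ⟨x, hx, rfl⟩ _ ⟨y, hy, rfl⟩ -
    have hxy : c x = c y := Eq.trans hx (Eq.symm hy)
    exact ⟨fun h ↦ hc x y h hxy, fun h ↦ hc y x h hxy.symm⟩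
  · rintro x ⟨hx, -⟩
    exact ⟨_, mem_range_self (c ⟨x, hx⟩), ⟨x, hx⟩, rfl, rfl⟩

end StreamKTree

end Trees

section RegressiveCodings

variable {X : Type u} {μ κ : Cardinal.{0}} {T : Set (PFn X)} {x y : PFn X}
  {G : PFn X → Ordinal.{0} × Ordinal.{0}}

/-- On the nodes of `T` whose height has cofinality `cf μ`, the map `G` is injective on chains and
has values `(β, i)` with `β` below the height of the node and `i < μ`. -/
structure IsRegressiveCoding (μ : Cardinal.{0}) (T : Set (PFn X))
    (G : PFn X → Ordinal.{0} × Ordinal.{0}) : Prop where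
  fst_lt : ∀ x ∈ T, (pDom x).cof = μ.ord.cof → (G x).1 < pDom x
  snd_lt : ∀ x ∈ T, (pDom x).cof = μ.ord.cof → (G x).2 < μ.ord
  ne_of_pLT : ∀ x ∈ T, ∀ y ∈ T, (pDom x).cof = μ.ord.cof → (pDom y).cof = μ.ord.cof →
    pLT x y → G x ≠ G y

theorem StreamKTree.exists_isRegressiveCoding (hμ : ℵ₀ ≤ μ) (hT : StreamKTree (Order.succ μ) T)
    {n : Ordinal.{0} → Ordinal.{0}} (hn : ∀ β < (Order.succ μ).ord, n β < (Order.succ μ).ord)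
    {β : PFn X → Ordinal.{0}} {p : PFn X → PFn X × Ordinal.{0}}
    (hβ : ∀ x ∈ T, (pDom x).cof = μ.ord.cof → β x < pDom x)
    (hp : ∀ x ∈ T, (pDom x).cof = μ.ord.cof →
      p x ∈ {t ∈ T | pDom t = β x} ×ˢ Iic (n (β x)))
    (h_ne : ∀ x ∈ T, ∀ y ∈ T, (pDom x).cof = μ.ord.cof → (pDom y).cof = μ.ord.cof →
      pLT x y → β x = β y → p x ≠ p y) :
    ∃ G, IsRegressiveCoding μ T G := by
  have h_index (γ : Ordinal.{0}) (hγ : γ < (Order.succ μ).ord) :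
      ∃ e : PFn X × Ordinal.{0} → Ordinal.{0},
        MapsTo e ({t ∈ T | pDom t = γ} ×ˢ Iic (n γ)) (Iio μ.ord) ∧
          InjOn e ({t ∈ T | pDom t = γ} ×ˢ Iic (n γ)) :=
    exists_injOn_mapsTo_Iio_ord (by simpa using hT.mk_level_prod_Iic_le hμ hγ (hn γ hγ))
  choose! index h_maps h_inj using h_index
  have hβκ (x : PFn X) (hx : x ∈ T) (hx_cof : (pDom x).cof = μ.ord.cof) :=
    (hβ x hx hx_cof).trans (hT.pDom_lt hx)
  refine ⟨fun x ↦ (β x, index (β x) (p x)), hβ, fun x hx hx_cof ↦ ?_,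
    fun x hx y hy hx_cof hy_cof hxy h_eq ↦ ?_⟩
  · exact h_maps _ (hβκ x hx hx_cof) (hp x hx hx_cof)
  · obtain ⟨h_fst, h_snd⟩ := Prod.mk.inj h_eq
    have hp_x := hp x hx hx_cof
    rw [h_fst] at h_snd hp_x
    exact h_ne x hx y hy hx_cof hy_cof hxy h_fst
      (h_inj _ (hβκ y hy hy_cof) hp_x (hp y hy hy_cof) h_snd)

open Classical in
/-- The rank `ρ x` of a node relative to a coding `G` with `G x = (β, i)`: it exceeds `i` and
`ρ (x ↾ β)` if the height of `x` has cofinality `cf μ`, and otherwise it is `M + 1` for the least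
`M` such that `ρ (x ↾ ζ) ≤ M` for cofinally many `ζ`. The clause `(G x).1 < pDom x`, which holds for
regressive codings, makes the recursion well-founded for every `G`. -/
def nodeRank (μ : Cardinal.{0}) (G : PFn X → Ordinal.{0} × Ordinal.{0}) (x : PFn X) :
    Ordinal.{0} :=
  if _ : (pDom x).cof = μ.ord.cof ∧ (G x).1 < pDom x then
    max (nodeRank μ G (pRestrict x (G x).1)) (G x).2 + 1
  else
    sInf {M | ∀ η < pDom x, ∃ ζ : Ico η (pDom x), nodeRank μ G (pRestrict x ζ) ≤ M} + 1
termination_by pDom x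
decreasing_by
  · exact (pDom_pRestrict_le _ _).trans_lt (by tauto)
  · exact (pDom_pRestrict_le _ _).trans_lt ζ.2.2

/-- The levels below a node at which its restriction has rank at most that of the node. -/
def lowLevels (μ : Cardinal.{0}) (G : PFn X → Ordinal.{0} × Ordinal.{0}) (x : PFn X) :
    Set Ordinal.{0} :=
  {ξ ∈ Iio (pDom x) | nodeRank μ G (pRestrict x ξ) ≤ nodeRank μ G x}

namespace IsSegment

theorem lowLevels_eq_inter_Iio (hx : IsSegment x) (hy : IsSegment y) (hxy : pLT x y)
    (h_rank : nodeRank μ G x = nodeRank μ G y) :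
    lowLevels μ G x = lowLevels μ G y ∩ Iio (pDom x) := by
  have h_dom := hx.pDom_lt_of_pLT hy hxy
  have h_restrict {ξ : Ordinal.{0}} (hξ : ξ < pDom x) : pRestrict x ξ = pRestrict y ξ := by
    rw [← pRestrict_pRestrict y hξ.le, hx.pRestrict_eq_of_pLE hxy.1]
  ext ξ
  refine ⟨fun ⟨hξ, hle⟩ ↦ ⟨⟨hξ.trans h_dom, ?_⟩, hξ⟩, fun ⟨⟨_, hle⟩, hξ⟩ ↦ ⟨hξ, ?_⟩⟩
  · rwa [← h_restrict hξ, ← h_rank]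
  · rwa [h_restrict hξ, h_rank]

theorem type_lowLevels_lt (hx : IsSegment x) (hy : IsSegment y) (hxy : pLT x y)
    (h_rank : nodeRank μ G x = nodeRank μ G y) :
    Ordinal.type (α := lowLevels μ G x) (· < ·) < Ordinal.type (α := lowLevels μ G y) (· < ·) := by
  rw [hx.lowLevels_eq_inter_Iio hy hxy h_rank]
  refine type_inter_Iio_lt_type ⟨hx.pDom_lt_of_pLT hy hxy, ?_⟩
  rw [hx.pRestrict_eq_of_pLE hxy.1, h_rank]

end IsSegment

namespace IsRegressiveCoding

theorem nodeRank_eq_of_cof_eq (hG : IsRegressiveCoding μ T G) (hx : x ∈ T)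
    (h : (pDom x).cof = μ.ord.cof) :
    nodeRank μ G x = max (nodeRank μ G (pRestrict x (G x).1)) (G x).2 + 1 := by
  rw [nodeRank, dif_pos ⟨h, hG.fst_lt x hx h⟩]

theorem nodeRank_lt_ord (hG : IsRegressiveCoding μ T G) (hμ : ℵ₀ ≤ μ) (hT : StreamKTree κ T)
    (hx : x ∈ T) : nodeRank μ G x < μ.ord := by
  have h_lim : IsSuccLimit μ.ord := isSuccLimit_ord hμ
  induction h : pDom x using WellFoundedLT.induction generalizing x with
  | ind δ ih =>
  subst h
  have ih_restrict : ∀ ξ < pDom x, nodeRank μ G (pRestrict x ξ) < μ.ord := fun ξ hξ ↦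
    ih _ ((pDom_pRestrict_le x ξ).trans_lt hξ) (hT.pRestrict_mem hx ξ) rfl
  by_cases h_cof : (pDom x).cof = μ.ord.cof
  · rw [hG.nodeRank_eq_of_cof_eq hx h_cof]
    exact h_lim.add_one_lt
      (max_lt (ih_restrict _ (hG.fst_lt x hx h_cof)) (hG.snd_lt x hx h_cof))
  · rw [nodeRank, dif_neg fun h ↦ h_cof h.1]
    obtain ⟨M, hM, hM_cofinal⟩ := exists_bound_cofinally_of_cof_ne h_cof ih_restrict
    refine h_lim.add_one_lt (lt_of_le_of_lt (csInf_le' ?_) hM)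
    exact hM_cofinal

theorem nodeRank_cofinally_lt (hG : IsRegressiveCoding μ T G) (hμ : ℵ₀ ≤ μ)
    (hT : StreamKTree κ T) (hx : x ∈ T) (h_cof : (pDom x).cof ≠ μ.ord.cof) {η : Ordinal.{0}}
    (hη : η < pDom x) : ∃ ζ ∈ Ico η (pDom x), nodeRank μ G (pRestrict x ζ) < nodeRank μ G x := by
  obtain ⟨M, -, hM⟩ := exists_bound_cofinally_of_cof_ne h_cof
    fun ξ _ ↦ hG.nodeRank_lt_ord hμ hT (hT.pRestrict_mem hx ξ)
  have h_bound := csInf_mem (s := {M | ∀ η < pDom x, ∃ ζ : Ico η (pDom x),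
    nodeRank μ G (pRestrict x ζ) ≤ M}) ⟨M, hM⟩
  obtain ⟨ζ, hζ⟩ := h_bound η hη
  refine ⟨ζ, ζ.2, ?_⟩
  rw [nodeRank.eq_def μ G x, dif_neg fun h ↦ h_cof h.1]
  exact Order.lt_add_one_iff.2 hζ

theorem injOn_pRestrict (hG : IsRegressiveCoding μ T G) (hT : StreamKTree κ T) (hx : x ∈ T) :
    InjOn (fun ξ ↦ G (pRestrict x ξ)) (Iio (pDom x) ∩ {ξ | ξ.cof = μ.ord.cof}) := by
  refine injOn_iff_injective.2 (.of_lt_imp_ne fun ⟨ξ, hξ, hξ_cof⟩ ⟨η, hη, hη_cof⟩ hlt ↦ ?_)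
  have hx_seg := hT.isSegment hx
  exact hG.ne_of_pLT _ (hT.pRestrict_mem hx ξ) _ (hT.pRestrict_mem hx η)
    (by rwa [hx_seg.pDom_pRestrict (le_of_lt hξ)]) (by rwa [hx_seg.pDom_pRestrict (le_of_lt hη)])
    (hx_seg.pRestrict_pLT_pRestrict hlt (le_of_lt hη))

theorem mk_lowLevels_lt (hG : IsRegressiveCoding μ T G) (hμ : ℵ₀ ≤ μ) (hT : StreamKTree κ T)
    (hx : x ∈ T) : #(lowLevels μ G x) < Cardinal.lift.{1} μ := by
  have h_mem (ξ : Ordinal.{0}) : pRestrict x ξ ∈ T := hT.pRestrict_mem hx ξ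
  have h_dom {ξ : Ordinal.{0}} (hξ : ξ < pDom x) : pDom (pRestrict x ξ) = ξ :=
    (hT.isSegment hx).pDom_pRestrict hξ.le
  have h_card : #(Iio (nodeRank μ G x + 1)) < Cardinal.lift.{1} μ := by
    rw [Cardinal.mk_Iio_ordinal, Cardinal.lift_lt, ← Cardinal.lt_ord]
    exact (isSuccLimit_ord hμ).add_one_lt (hG.nodeRank_lt_ord hμ hT hx)
  simp only [lowLevels, ← Order.lt_add_one_iff]
  refine mk_rank_lt_lt (S := {ξ | ξ.cof = μ.ord.cof}) (g := fun ξ ↦ G (pRestrict x ξ))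
    (hG.injOn_pRestrict hT hx) ?_ ?_ (by simpa using hμ) h_card
  · rintro ξ ⟨hξ, hξ_cof⟩
    rw [mem_ofPred_eq, ← h_dom hξ] at hξ_cof
    have h_fst := (hG.fst_lt _ (h_mem ξ) hξ_cof).trans_eq (h_dom hξ)
    refine ⟨h_fst.trans hξ, ?_⟩
    rw [hG.nodeRank_eq_of_cof_eq (h_mem ξ) hξ_cof, pRestrict_pRestrict x h_fst.le]
    exact ⟨Order.lt_add_one_iff.2 (le_max_left _ _), Order.lt_add_one_iff.2 (le_max_right _ _)⟩
  · rintro ξ ⟨hξ, hξ_cof⟩ η hη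
    rw [mem_ofPred_eq, ← h_dom hξ] at hξ_cof
    obtain ⟨ζ, hζ, h_lt⟩ :=
      hG.nodeRank_cofinally_lt hμ hT (h_mem ξ) hξ_cof (hη.trans_eq (h_dom hξ).symm)
    rw [h_dom hξ] at hζ
    rw [pRestrict_pRestrict x hζ.2.le] at h_lt
    exact ⟨ζ, hζ.2.trans hξ, hζ, h_lt⟩

theorem specialOn (hG : IsRegressiveCoding μ T G) (hμ : ℵ₀ ≤ μ)
    (hT : StreamKTree (Order.succ μ) T) : SpecialOn (Order.succ μ) T pLT := by
  let lowType (x : PFn X) : Ordinal.{1} := Ordinal.type (α := lowLevels μ G x) (· < ·)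
  have h_type (x : T) : lowType x < (Cardinal.lift.{1} μ).ord := by
    rw [Cardinal.lt_ord, Ordinal.card_type]
    exact hG.mk_lowLevels_lt hμ hT x.2
  let color (x : T) : Iio μ.ord × Iio (Cardinal.lift.{1} μ).ord :=
    (⟨nodeRank μ G x, hG.nodeRank_lt_ord hμ hT x.2⟩, ⟨lowType x, h_type x⟩)
  refine hT.specialOn_of_coloring ?_ color fun x y hxy h_eq ↦ ?_
  · simp only [Cardinal.mk_prod, Cardinal.mk_Iio_ordinal, Cardinal.card_ord, Cardinal.lift_lift,
      Cardinal.lift_mul]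
    rw [Cardinal.mul_eq_self (by simpa using hμ)]
    exact Cardinal.lift_lt.2 (Order.lt_succ μ)
  · have h_rank : nodeRank μ G x = nodeRank μ G y := congrArg (fun p ↦ (p.1 : Ordinal.{0})) h_eq
    have h_low : lowType x = lowType y := congrArg (fun p ↦ (p.2 : Ordinal.{1})) h_eq
    exact ((hT.isSegment x.2).type_lowLevels_lt (hT.isSegment y.2) hxy h_rank).ne h_low

end IsRegressiveCoding

end RegressiveCodings

section Clubs

variable {D : Set Ordinal.{0}} {κ β δ : Ordinal.{0}}

/-- The least point of `D` above `β` (junk value `0` if there is none). -/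
def nextPoint (D : Set Ordinal.{0}) (β : Ordinal.{0}) : Ordinal.{0} := sInf (D ∩ Ioi β)

namespace IsClubIn

theorem nextPoint_mem (hD : IsClubIn D κ) (hβ : β < κ) : nextPoint D β ∈ D ∩ Ioi β :=
  csInf_mem (hD.2.2 β hβ)

theorem nextPoint_lt (hD : IsClubIn D κ) (hβ : β < κ) : nextPoint D β < κ :=
  hD.1 (hD.nextPoint_mem hβ).1

theorem lt_nextPoint (hD : IsClubIn D κ) (hβ : β < κ) : β < nextPoint D β :=
  (hD.nextPoint_mem hβ).2

theorem sSup_inter_Iio_lt_s5 (hD : IsClubIn D κ) (hδ₀ : 0 < δ) (hδκ : δ < κ) (hδD : δ ∉ D) :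
    sSup (D ∩ Iio δ) < δ :=
  (csSup_le' fun _ hε ↦ le_of_lt hε.2).lt_of_ne fun h ↦ hδD (hD.2.1 δ hδκ hδ₀ h)

theorem le_nextPoint_sSup (hD : IsClubIn D κ) (hδ₀ : 0 < δ) (hδκ : δ < κ) (hδD : δ ∉ D) :
    δ ≤ nextPoint D (sSup (D ∩ Iio δ)) := by
  obtain ⟨hmem, hlt⟩ := hD.nextPoint_mem ((hD.sSup_inter_Iio_lt_s5 hδ₀ hδκ hδD).trans hδκ)
  by_contra! h
  exact hlt.not_ge (le_csSup (bddAbove_Iio.mono inter_subset_right) ⟨hmem, h⟩)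

end IsClubIn

end Clubs

section CodesFromClubs

variable {X : Type u} {κ μ : Cardinal.{0}} {T : Set (PFn X)} {S D : Set Ordinal.{0}}
  {b : Ordinal.{0} → PFn X} {d : PFn X → Ordinal.{0}} {x y : PFn X} {β : Ordinal.{0}}
  {p : PFn X × Ordinal.{0}}

theorem SCoherent.exists_eqOn_Ico (hcoh : SCoherent S T) {s t : PFn X} (hs : s ∈ T) (ht : t ∈ T)
    (hsS : pDom s ∈ S) (h_dom : pDom t = pDom s) (h_lim : IsSuccLimit (pDom s))
    {ε : Ordinal.{0}} (hε : ε < pDom s) :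
    ∃ β ∈ Ioo ε (pDom s), EqOn s t (Ico β (pDom s)) := by
  let σ := sSup {γ | γ < pDom s ∧ s γ ≠ t γ}
  have hσ : σ < pDom s := hcoh _ hsS s hs t ht rfl h_dom
  refine ⟨max σ ε + 1, ⟨Order.lt_add_one_iff.2 (le_max_right _ _),
    h_lim.add_one_lt (max_lt hσ hε)⟩, fun γ ⟨hβγ, hγ⟩ ↦ ?_⟩
  by_contra h_ne
  have hγσ : γ ≤ σ := le_csSup (bddAbove_Iio.mono fun _ h ↦ h.1) ⟨hγ, h_ne⟩
  exact (Order.add_one_le_iff.1 hβγ).not_ge (hγσ.trans (le_max_left _ _))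

/-- `p` codes `x` over the level `β < ht x`. At a level `δ ∈ D`, `p` records `b δ ↾ β` and
`d (b δ)`, where `β` is beyond `d (b δ)` and the disagreement of `x` with `b δ`; at a level outside
`D`, it records `x ↾ β` and `ht x`. -/
def IsCode (D : Set Ordinal.{0}) (b : Ordinal.{0} → PFn X) (d : PFn X → Ordinal.{0})
    (x : PFn X) (β : Ordinal.{0}) (p : PFn X × Ordinal.{0}) : Prop :=
  β < pDom x ∧
    (pDom x ∈ D ∧ d (b (pDom x)) < β ∧ EqOn x (b (pDom x)) (Ico β (pDom x)) ∧
        p = (pRestrict (b (pDom x)) β, d (b (pDom x))) ∨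
      pDom x ∉ D ∧ p = (pRestrict x β, pDom x))

theorem StreamKTree.exists_isCode (hT : StreamKTree κ T) (hcoh : SCoherent S T)
    (hD : IsClubIn D κ.ord) (hb : ∀ δ ∈ D ∩ S, b δ ∈ T ∧ pDom (b δ) = δ)
    (hd : ∀ δ ∈ D ∩ S, d (b δ) < δ) (hx : x ∈ T) (hxS : pDom x ∈ S)
    (h_lim : IsSuccLimit (pDom x)) :
    ∃ β, ∃ p ∈ {t ∈ T | pDom t = β} ×ˢ Iic (nextPoint D β), IsCode D b d x β p := by
  have hxκ := hT.pDom_lt hx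
  by_cases hxD : pDom x ∈ D
  · obtain ⟨hbT, hb_dom⟩ := hb _ ⟨hxD, hxS⟩
    obtain ⟨β, ⟨hdβ, hβ⟩, h_eq⟩ := hcoh.exists_eqOn_Ico hx hbT hxS hb_dom h_lim (hd _ ⟨hxD, hxS⟩)
    have h_restrict := (hT.isSegment hbT).pDom_pRestrict (hβ.le.trans_eq hb_dom.symm)
    exact ⟨β, (_, _), ⟨⟨hT.pRestrict_mem hbT β, h_restrict⟩,
      (hdβ.trans (hD.lt_nextPoint (hβ.trans hxκ))).le⟩, hβ, .inl ⟨hxD, hdβ, h_eq, rfl⟩⟩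
  · have hβ := hD.sSup_inter_Iio_lt_s5 h_lim.bot_lt hxκ hxD
    exact ⟨_, (_, _), ⟨⟨hT.pRestrict_mem hx _, (hT.isSegment hx).pDom_pRestrict hβ.le⟩,
      hD.le_nextPoint_sSup h_lim.bot_lt hxκ hxD⟩, hβ, .inr ⟨hxD, rfl⟩⟩

theorem StreamKTree.not_pLT_of_isCode (hT : StreamKTree κ T)
    (hb : ∀ δ ∈ D ∩ S, b δ ∈ T ∧ pDom (b δ) = δ)
    (hd : ∀ γ ∈ D ∩ S, ∀ δ ∈ D ∩ S, pLT (b γ) (b δ) → d (b γ) ≠ d (b δ))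
    (hx : x ∈ T) (hy : y ∈ T) (hxS : pDom x ∈ S) (hyS : pDom y ∈ S)
    (hxp : IsCode D b d x β p) (hyp : IsCode D b d y β p) : ¬ pLT x y := by
  intro hxy
  have h_dom := (hT.isSegment hx).pDom_lt_of_pLT (hT.isSegment hy) hxy
  obtain ⟨hxβ, ⟨hxD, hxd, hx_eq, rfl⟩ | ⟨-, rfl⟩⟩ := hxp <;>
  obtain ⟨hyβ, ⟨hyD, hyd, hy_eq, hp⟩ | ⟨-, hp⟩⟩ := hyp <;>
  obtain ⟨hp₁, hp₂⟩ := Prod.mk.inj hp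
  · obtain ⟨hbx, hbx_dom⟩ := hb _ ⟨hxD, hxS⟩
    obtain ⟨-, hby_dom⟩ := hb _ ⟨hyD, hyS⟩
    have h_le := (hT.isSegment hbx).pLE_of_eqOn_Ico (hT.isSegment hy) hxy.1 hbx_dom hp₁ hx_eq hy_eq
    have h_ne : b (pDom x) ≠ b (pDom y) := fun h ↦
      h_dom.ne (by rw [← hbx_dom, h, hby_dom])
    exact hd _ ⟨hxD, hxS⟩ _ ⟨hyD, hyS⟩ ⟨h_le, h_ne⟩ hp₂
  · exact (hxd.trans hyβ).ne hp₂
  · exact (hyd.trans hxβ).ne hp₂.symm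
  · exact h_dom.ne hp₂

end CodesFromClubs

/-- Lemma 2.7: if `T` is an `E^{μ⁺}_{cf μ}`-coherent streamlined `μ⁺`-tree, and
`d` is a function defined on nodes `b_δ ∈ T_δ` for `δ ∈ D ∩ E^{μ⁺}_{cf μ}` (`D` a
club) with `d(b_δ) < δ` which is injective on chains, then `T` is special. -/
theorem coherent_tree_special {X : Type u}
    (μ : Cardinal.{0}) (hμ : ℵ₀ ≤ μ)
    (T : Set (PFn X)) (hT : StreamKTree (Order.succ μ) T)
    (hcoh : SCoherent (ECof (Order.succ μ).ord μ.ord.cof) T)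
    (D : Set Ordinal.{0}) (hD : IsClubIn D (Order.succ μ).ord)
    (b : Ordinal.{0} → PFn X)
    (hb : ∀ δ ∈ D ∩ ECof (Order.succ μ).ord μ.ord.cof, b δ ∈ T ∧ pDom (b δ) = δ)
    (d : PFn X → Ordinal.{0})
    (hd1 : ∀ δ ∈ D ∩ ECof (Order.succ μ).ord μ.ord.cof, d (b δ) < δ)
    (hd2 : ∀ γ ∈ D ∩ ECof (Order.succ μ).ord μ.ord.cof,
      ∀ δ ∈ D ∩ ECof (Order.succ μ).ord μ.ord.cof,
        pLT (b γ) (b δ) → d (b γ) ≠ d (b δ)) :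
    SpecialOn (Order.succ μ) T pLT := by
  have mem_ECof {x : PFn X} (hx : x ∈ T) (hx_cof : (pDom x).cof = μ.ord.cof) :
      pDom x ∈ ECof (Order.succ μ).ord μ.ord.cof := ⟨hT.pDom_lt hx, hx_cof⟩
  have h_code (x : PFn X) (hx : x ∈ T) (hx_cof : (pDom x).cof = μ.ord.cof) :=
    hT.exists_isCode hcoh hD hb hd1 hx (mem_ECof hx hx_cof)
      (isSuccLimit_of_cof_eq (isSuccLimit_ord hμ) hx_cof)
  choose! β p hp h_isCode using h_code
  obtain ⟨G, hG⟩ := hT.exists_isRegressiveCoding hμ (fun _ ↦ hD.nextPoint_lt)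
    (fun x hx hx_cof ↦ (h_isCode x hx hx_cof).1) hp
    fun x hx y hy hx_cof hy_cof hxy hβ h_eq ↦
      hT.not_pLT_of_isCode hb hd2 hx hy (mem_ECof hx hx_cof) (mem_ECof hy hy_cof)
        (h_isCode x hx hx_cof) (hβ ▸ h_eq ▸ h_isCode y hy hy_cof) hxy
  exact hG.specialOn hμ hT

end
end

section
/- Let κ be a regular uncountable cardinal and θ < κ a cardinal. Suppose c : [κ]² → θ is a colouring witnessing U(κ,2,θ,3). Then for every Υ ⊆ κ of size κ, the set {δ < κ | sup{c(δ,υ) | υ ∈ Υ, δ < υ} < θ} is bounded below κ. -/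
open Set Cardinal Ordinal

noncomputable section

/-- `c` is a witness to the principle `U(κ,λ,θ,χ)`: for every cardinal `ζ < χ`,
every `κ`-sized pairwise disjoint family `A` of `ζ`-sized subsets of `κ`, and every
colour `τ < θ`, there is a subfamily `B ⊆ A` of size `λ` such that `c(α,β) > τ`
whenever `α ∈ a`, `β ∈ b`, `α < β` for distinct `a, b ∈ B`.
(The colouring `c : [κ]² → θ` is represented by a two-variable function, evaluated
on pairs `α < β`.) -/
def UWitness (κ lam θ χ : Cardinal.{0}) (c : Ordinal → Ordinal → Ordinal) : Prop :=
  ∀ ζ : Cardinal.{0}, ζ < χ →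
    ∀ A : Set (Set Ordinal),
      (∀ a ∈ A, a ⊆ Iio κ.ord ∧ #a = Cardinal.lift.{1} ζ) →
      A.PairwiseDisjoint id →
      #A = Cardinal.lift.{1} κ →
      ∀ τ : Ordinal, τ < θ.ord →
        ∃ B ⊆ A, #B = Cardinal.lift.{1} lam ∧
          ∀ a ∈ B, ∀ b ∈ B, a ≠ b → ∀ α ∈ a, ∀ β ∈ b, α < β → τ < c α β

/-! Fix `τ < θ`, and let `D` be the set of `δ < κ` with `c(δ,υ) ≤ τ` for all `υ ∈ Υ` above `δ`.
If `D` were unbounded in `κ`, there would be `κ` many pairwise disjoint pairs `{δ, υ}` with `δ ∈ D`,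
`υ ∈ Υ` and `δ < υ`. Of the two such pairs provided by `U` at the colour `τ`, the one with the
smaller first coordinate `δ` yields `c(δ,υ') > τ` for the second coordinate `υ'` of the other,
contradicting `δ ∈ D`. So `D` is bounded for each `τ`, and by regularity of `κ` so is the union of
these sets over a cofinal set of fewer than `κ` colours `τ < θ`. -/

universe u v

/-- `s` is bounded below the ordinal `o`: some `ε < o` is an upper bound of `s`. In contrast to
`BddAbove`, the bound is required to lie strictly below `o`. -/
def BoundedIn (o : Ordinal.{u}) (s : Set Ordinal.{u}) : Prop :=
  ∃ ε < o, ∀ x ∈ s, x ≤ ε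

theorem BoundedIn.mono {o : Ordinal.{u}} {s t : Set Ordinal.{u}} (hst : s ⊆ t)
    (ht : BoundedIn o t) : BoundedIn o s := by
  obtain ⟨ε, hε, hle⟩ := ht
  exact ⟨ε, hε, fun x hx => hle x (hst hx)⟩

theorem exists_lt_of_not_boundedIn {o : Ordinal.{u}} {s : Set Ordinal.{u}}
    (hs : ¬ BoundedIn o s) {ε : Ordinal.{u}} (hε : ε < o) : ∃ x ∈ s, ε < x := by
  by_contra! hle
  exact hs ⟨ε, hε, hle⟩

theorem BoundedIn.iUnion {o : Ordinal.{u}} {ι : Type v} {s : ι → Set Ordinal.{u}}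
    (hι : Cardinal.lift.{u} #ι < Cardinal.lift.{v} o.cof) (hs : ∀ i, BoundedIn o (s i)) :
    BoundedIn o (⋃ i, s i) := by
  choose ε hε hle using hs
  have : Small.{u} (range ε) := bddAbove_iff_small.1 ⟨o, forall_mem_range.2 fun i => (hε i).le⟩
  refine ⟨⨆ i, ε i, lift_iSup_lt_of_lt_cof (by simpa [← lift_cof] using hι) hε, fun x hx => ?_⟩
  obtain ⟨i, hi⟩ := mem_iUnion.1 hx
  exact (hle i x hi).trans (le_ciSup Ordinal.bddAbove_of_small i)

theorem BoundedIn.mk_lt {κ : Cardinal.{u}} (hκ : ℵ₀ ≤ κ) {s : Set Ordinal.{u}}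
    (hs : BoundedIn κ.ord s) : #s < Cardinal.lift.{u + 1} κ := by
  obtain ⟨ε, hε, hle⟩ := hs
  have hsucc : Order.succ ε < κ.ord := (isSuccLimit_ord hκ).succ_lt hε
  calc #s ≤ #(Iio (Order.succ ε)) := mk_le_mk_of_subset fun x hx => Order.lt_succ_of_le (hle x hx)
    _ = Cardinal.lift.{u + 1} (Order.succ ε).card := Cardinal.mk_Iio_ordinal _
    _ < Cardinal.lift.{u + 1} κ := Cardinal.lift_lt.2 (lt_ord.1 hsucc)

theorem exists_maximal_pairwiseDisjoint {α : Type u} (F : Set (Set α)) :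
    ∃ M, Maximal (fun A => A ⊆ F ∧ A.PairwiseDisjoint id) M :=
  zorn_subset {A | A ⊆ F ∧ A.PairwiseDisjoint id} fun C hC hchain =>
    ⟨⋃₀ C, ⟨sUnion_subset fun _ hA => (hC hA).1,
      (hchain.pairwiseDisjoint_sUnion id).2 fun _ hA => (hC hA).2⟩,
      fun _ => subset_sUnion_of_mem⟩

theorem exists_pairwiseDisjoint_subset_mk_eq {κ : Cardinal.{u}} (hκ : κ.IsRegular)
    {F : Set (Set Ordinal.{u})} (hbdd : ∀ a ∈ F, BoundedIn κ.ord a)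
    (hF : ∀ ε < κ.ord, ∃ a ∈ F, a.Nonempty ∧ a ⊆ Ioi ε) :
    ∃ A ⊆ F, A.PairwiseDisjoint id ∧ #A = Cardinal.lift.{u + 1} κ := by
  obtain ⟨M, hM⟩ := exists_maximal_pairwiseDisjoint F
  have hcard : Cardinal.lift.{u + 1} κ ≤ #M := by
    by_contra! hlt
    have hbddM : BoundedIn κ.ord (⋃ a : M, a.1) :=
      .iUnion (by rwa [Cardinal.lift_id'.{u, u + 1}, hκ.cof_ord]) fun a => hbdd a (hM.prop.1 a.2)
    obtain ⟨ε, hε, hle⟩ := hbddM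
    obtain ⟨a, haF, ⟨x, hxa⟩, haε⟩ := hF ε hε
    have hle' : ∀ b ∈ M, ∀ y ∈ b, y ≤ ε := fun b hb y hy => hle y (mem_iUnion.2 ⟨⟨b, hb⟩, hy⟩)
    have hdisj : ∀ b ∈ M, a ≠ b → Disjoint a b := fun b hb _ =>
      disjoint_left.2 fun y hya hyb => (hle' b hb y hyb).not_gt (haε hya)
    have haM : a ∈ M := hM.le_of_ge ⟨insert_subset haF hM.prop.1, hM.prop.2.insert hdisj⟩
      (subset_insert a M) (mem_insert a M)
    exact (hle' a haM x hxa).not_gt (haε hxa)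
  obtain ⟨A, hAM, hA⟩ := le_mk_iff_exists_subset.1 hcard
  exact ⟨A, hAM.trans hM.prop.1, hM.prop.2.subset hAM, hA⟩

/-- The family of two-element sets `{δ, υ}` with `δ ∈ D`, `υ ∈ Y` and `δ < υ`. -/
def increasingPairs {α : Type u} [LT α] (D Y : Set α) : Set (Set α) :=
  {a | ∃ δ ∈ D, ∃ υ ∈ Y, δ < υ ∧ a = {δ, υ}}

theorem mk_eq_two_of_mem_increasingPairs {α : Type u} [Preorder α] {D Y a : Set α}
    (ha : a ∈ increasingPairs D Y) : #a = 2 := by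
  obtain ⟨δ, -, υ, -, hlt, rfl⟩ := ha
  rw [mk_insert (mt mem_singleton_iff.1 hlt.ne), mk_singleton, one_add_one_eq_two]

theorem subset_union_of_mem_increasingPairs {α : Type u} [LT α] {D Y a : Set α}
    (ha : a ∈ increasingPairs D Y) : a ⊆ D ∪ Y := by
  obtain ⟨δ, hδ, υ, hυ, -, rfl⟩ := ha
  exact insert_subset (.inl hδ) (singleton_subset_iff.2 (.inr hυ))

theorem exists_lt_across_of_mem_increasingPairs {α : Type u} [LinearOrder α] {D Y a b : Set α}
    (ha : a ∈ increasingPairs D Y) (hb : b ∈ increasingPairs D Y) (hab : Disjoint a b) :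
    ∃ δ ∈ D, ∃ υ ∈ Y, δ < υ ∧ (δ ∈ a ∧ υ ∈ b ∨ δ ∈ b ∧ υ ∈ a) := by
  obtain ⟨δ, hδ, υ, hυ, hlt, rfl⟩ := ha
  obtain ⟨δ', hδ', υ', hυ', hlt', rfl⟩ := hb
  have hne : δ ≠ δ' := hab.ne_of_mem (mem_insert δ _) (mem_insert δ' _)
  rcases hne.lt_or_gt with hδδ' | hδ'δ
  · exact ⟨δ, hδ, υ', hυ', hδδ'.trans hlt', .inl (by simp)⟩
  · exact ⟨δ', hδ', υ, hυ, hδ'δ.trans hlt, .inr (by simp)⟩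

theorem exists_pairwiseDisjoint_subset_increasingPairs {κ : Cardinal.{u}} (hκ : κ.IsRegular)
    {D Y : Set Ordinal.{u}} (hDκ : D ⊆ Iio κ.ord) (hYκ : Y ⊆ Iio κ.ord)
    (hD : ¬ BoundedIn κ.ord D) (hY : ¬ BoundedIn κ.ord Y) :
    ∃ A ⊆ increasingPairs D Y, A.PairwiseDisjoint id ∧ #A = Cardinal.lift.{u + 1} κ := by
  refine exists_pairwiseDisjoint_subset_mk_eq hκ ?_ fun ε hε => ?_
  · rintro _ ⟨δ, -, υ, hυ, hlt, rfl⟩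
    exact ⟨υ, hYκ hυ, by simp [hlt.le]⟩
  · obtain ⟨δ, hδ, hεδ⟩ := exists_lt_of_not_boundedIn hD hε
    obtain ⟨υ, hυ, hδυ⟩ := exists_lt_of_not_boundedIn hY (hDκ hδ)
    exact ⟨{δ, υ}, ⟨δ, hδ, υ, hυ, hδυ, rfl⟩, insert_nonempty δ _,
      insert_subset hεδ (singleton_subset_iff.2 (hεδ.trans hδυ))⟩

namespace UWitness

variable {κ lam θ χ : Cardinal.{0}} {c : Ordinal.{0} → Ordinal.{0} → Ordinal.{0}}

theorem exists_lt_apply (hU : UWitness κ lam θ χ c) (hκ : κ.IsRegular) (hlam : 2 ≤ lam)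
    (hχ : 2 < χ) {D Y : Set Ordinal.{0}} (hDκ : D ⊆ Iio κ.ord) (hYκ : Y ⊆ Iio κ.ord)
    (hD : ¬ BoundedIn κ.ord D) (hY : ¬ BoundedIn κ.ord Y) {τ : Ordinal.{0}} (hτ : τ < θ.ord) :
    ∃ δ ∈ D, ∃ υ ∈ Y, δ < υ ∧ τ < c δ υ := by
  obtain ⟨A, hA, hdisj, hcard⟩ :=
    exists_pairwiseDisjoint_subset_increasingPairs hκ hDκ hYκ hD hY
  have hpairs : ∀ a ∈ A, a ⊆ Iio κ.ord ∧ #a = Cardinal.lift.{1} (2 : Cardinal.{0}) := fun a ha =>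
    ⟨(subset_union_of_mem_increasingPairs (hA ha)).trans (union_subset hDκ hYκ),
      by rw [mk_eq_two_of_mem_increasingPairs (hA ha), Cardinal.lift_ofNat]⟩
  obtain ⟨B, hBA, hBcard, hB⟩ := hU 2 hχ A hpairs hdisj hcard τ hτ
  obtain ⟨⟨a, ha⟩, ⟨b, hb⟩, hne⟩ : ∃ a b : B, a ≠ b :=
    two_le_iff.1 (by simpa [hBcard] using hlam)
  have hab : a ≠ b := fun h => hne (Subtype.ext h)
  obtain ⟨δ, hδ, υ, hυ, hlt, ⟨hδa, hυb⟩ | ⟨hδb, hυa⟩⟩ := exists_lt_across_of_mem_increasingPairs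
    (hA (hBA ha)) (hA (hBA hb)) (hdisj (hBA ha) (hBA hb) hab)
  · exact ⟨δ, hδ, υ, hυ, hlt, hB a ha b hb hab δ hδa υ hυb hlt⟩
  · exact ⟨δ, hδ, υ, hυ, hlt, hB b hb a ha hab.symm δ hδb υ hυa hlt⟩

theorem boundedIn_forall_apply_le (hU : UWitness κ lam θ χ c) (hκ : κ.IsRegular) (hlam : 2 ≤ lam)
    (hχ : 2 < χ) {Y : Set Ordinal.{0}} (hYκ : Y ⊆ Iio κ.ord) (hY : ¬ BoundedIn κ.ord Y)
    {τ : Ordinal.{0}} (hτ : τ < θ.ord) :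
    BoundedIn κ.ord {δ | δ < κ.ord ∧ ∀ υ ∈ Y, δ < υ → c δ υ ≤ τ} := by
  by_contra hD
  obtain ⟨δ, hδ, υ, hυ, hlt, hτc⟩ :=
    hU.exists_lt_apply hκ hlam hχ (fun _ hδ => hδ.1) hYκ hD hY hτ
  exact (hδ.2 υ hυ hlt).not_gt hτc

end UWitness

theorem apply_le_sSup_of_bddAbove {f : Ordinal.{u} → Ordinal.{u}} {Y : Set Ordinal.{u}}
    (hY : BddAbove Y) {δ υ : Ordinal.{u}} (hυ : υ ∈ Y) (hlt : δ < υ) :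
    f υ ≤ sSup {x | ∃ υ ∈ Y, δ < υ ∧ x = f υ} := by
  refine le_csSup ((bddAbove_image hY f).mono ?_) ⟨υ, hυ, hlt, rfl⟩
  rintro _ ⟨υ', hυ', -, rfl⟩
  exact mem_image_of_mem f hυ'

theorem U_bounded_fibers_general {κ lam θ χ : Cardinal.{0}} (hκ : κ.IsRegular)
    (hθ : θ.ord.cof < κ) (hlam : 2 ≤ lam) (hχ : 2 < χ)
    {c : Ordinal.{0} → Ordinal.{0} → Ordinal.{0}} (hU : UWitness κ lam θ χ c)
    {Υ : Set Ordinal.{0}} (hΥκ : Υ ⊆ Iio κ.ord) (hΥ : #Υ = Cardinal.lift.{1} κ) :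
    BoundedIn κ.ord
      {δ | δ < κ.ord ∧ sSup {x : Ordinal | ∃ υ ∈ Υ, δ < υ ∧ x = c δ υ} < θ.ord} := by
  have hΥunb : ¬ BoundedIn κ.ord Υ := fun h => (h.mk_lt hκ.aleph0_le).ne hΥ
  obtain ⟨T, hTcof, hTcard⟩ := Order.exists_cof_eq (Iio θ.ord)
  have hTκ : #T < Cardinal.lift.{1} κ := by
    rwa [hTcard, cof_Iio, ← lift_cof, Cardinal.lift_lt]
  have hbdd : BoundedIn κ.ord
      (⋃ τ : T, {δ | δ < κ.ord ∧ ∀ υ ∈ Υ, δ < υ → c δ υ ≤ τ.1}) :=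
    .iUnion (by rwa [Cardinal.lift_id'.{0, 1}, hκ.cof_ord]) fun τ =>
      hU.boundedIn_forall_apply_le hκ hlam hχ hΥκ hΥunb τ.1.2
  refine hbdd.mono ?_
  rintro δ ⟨hδ, hsup⟩
  obtain ⟨τ, hτT, hτ⟩ := hTcof ⟨_, hsup⟩
  exact mem_iUnion.2 ⟨⟨τ, hτT⟩, hδ, fun υ hυ hlt =>
    (apply_le_sSup_of_bddAbove ⟨κ.ord, fun _ h => (hΥκ h).le⟩ hυ hlt).trans hτ⟩

/-- Proposition 3.5: if `θ < κ` and `c : [κ]² → θ` witnesses `U(κ,2,θ,3)`, then for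
every `Υ ⊆ κ` of size `κ`, the set of `δ < κ` for which
`sup { c(δ,υ) | υ ∈ Υ ∖ (δ+1) } < θ` is bounded below `κ`. -/
theorem U_bounded_fibers (κ θ : Cardinal.{0}) (hκreg : κ.IsRegular) (hκunc : ℵ₀ < κ)
    (hθ : θ < κ)
    (c : Ordinal → Ordinal → Ordinal)
    (hrange : ∀ α β : Ordinal, α < β → β < κ.ord → c α β < θ.ord)
    (hU : UWitness κ 2 θ 3 c) :
    ∀ Υ : Set Ordinal, Υ ⊆ Iio κ.ord → #Υ = Cardinal.lift.{1} κ →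
      ∃ ε < κ.ord, ∀ δ, δ < κ.ord →
        sSup {x : Ordinal | ∃ υ ∈ Υ, δ < υ ∧ x = c δ υ} < θ.ord → δ ≤ ε := by
  intro Υ hΥκ hΥ
  obtain ⟨ε, hε, hle⟩ := U_bounded_fibers_general hκreg ((cof_ord_le θ).trans_lt hθ) le_rfl
    (by norm_num) hU hΥκ hΥ
  exact ⟨ε, hε, fun δ hδ hsup => hle δ ⟨hδ, hsup⟩⟩

end
end

section
/- For every positive integer n there exist a positive integer b and a function h : ℕ → {0,1} such that for every function p : {0,…,n−1} → ℕ and every l ∈ {0,1}, there exists i < b such that h((p(k)+i) mod b) = l for every k < n. -/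
/-!
Fix pairwise coprime moduli `m j`, one for each `j < n`, all larger than `n`, and colour `x` by
whether some `m j` divides it; this colouring has period `b = ∏ j, m j`. By the Chinese remainder
theorem the residues of the shift `i` modulo the `m j` can be prescribed independently. To give
every `p k + i` the colour `1`, let the `k`-th modulus divide `p k + i`. To give every `p k + i`
the colour `0`, choose `i` modulo each `m j` outside the at most `n < m j` residues `-p k`.
-/

theorem exists_seq_gt_pairwise_coprime (N : ℕ) :
    ∃ s : ℕ → ℕ, (∀ j, N < s j) ∧ Pairwise (Function.onFun Nat.Coprime s) := by
  refine ⟨fun j ↦ Nat.nth Nat.Prime (N + j), fun j ↦ ?_, fun i j hij ↦ ?_⟩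
  · calc
      N < N + j + 2 := by omega
      _ ≤ Nat.nth Nat.Prime (N + j) := Nat.add_two_le_nth_prime (N + j)
  · refine (Nat.coprime_primes (Nat.prime_nth_prime _) (Nat.prime_nth_prime _)).mpr fun h ↦ hij ?_
    exact Nat.add_left_cancel (Nat.nth_injective Nat.infinite_setOfPred_prime h)

theorem exists_dvd_add {m : ℕ} (hm : m ≠ 0) (q : ℕ) : ∃ a, m ∣ q + a := by
  have : NeZero m := ⟨hm⟩
  exact ⟨(-q : ZMod m).val, by simp [← ZMod.natCast_eq_zero_iff]⟩

theorem exists_forall_not_dvd_add {κ : Type*} [Fintype κ] {m : ℕ} (hm : Fintype.card κ < m)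
    (p : κ → ℕ) : ∃ a, ∀ k, ¬ m ∣ p k + a := by
  have : NeZero m := ⟨hm.ne_bot⟩
  have not_surjective : ¬ Function.Surjective fun k ↦ (-p k : ZMod m) := fun h ↦
    (Fintype.card_le_of_surjective _ h).not_gt (by rwa [ZMod.card])
  obtain ⟨a, ha⟩ := not_forall.mp not_surjective
  refine ⟨a.val, fun k hdvd ↦ ha ⟨k, ?_⟩⟩
  rw [← ZMod.natCast_eq_zero_iff, Nat.cast_add, ZMod.natCast_zmod_val] at hdvd
  exact neg_eq_of_add_eq_zero_right hdvd

section Moduli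

variable {ι : Type*} [Fintype ι] {m : ι → ℕ}

theorem exists_lt_prod_forall_modEq (hm : ∀ j, m j ≠ 0)
    (hcop : Pairwise (Function.onFun Nat.Coprime m)) (a : ι → ℕ) :
    ∃ i < ∏ j, m j, ∀ j, i ≡ a j [MOD m j] := by
  have hcop' : Set.Pairwise (Finset.univ : Finset ι) (Function.onFun Nat.Coprime m) :=
    hcop.set_pairwise _
  exact ⟨_, Nat.chineseRemainderOfFinset_lt_prod a m (fun j _ ↦ hm j) hcop',
    fun j ↦ (Nat.chineseRemainderOfFinset a m _ (fun j _ ↦ hm j) hcop').2 j (Finset.mem_univ j)⟩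

theorem exists_lt_prod_forall_dvd_add (hm : ∀ j, m j ≠ 0)
    (hcop : Pairwise (Function.onFun Nat.Coprime m)) (p : ι → ℕ) :
    ∃ i < ∏ j, m j, ∀ j, m j ∣ p j + i := by
  choose a ha using fun j ↦ exists_dvd_add (hm j) (p j)
  obtain ⟨i, hi, hia⟩ := exists_lt_prod_forall_modEq hm hcop a
  exact ⟨i, hi, fun j ↦ (((hia j).add_left (p j)).dvd_iff dvd_rfl).mpr (ha j)⟩

theorem exists_lt_prod_forall_not_dvd_add {κ : Type*} [Fintype κ]
    (hm : ∀ j, Fintype.card κ < m j) (hcop : Pairwise (Function.onFun Nat.Coprime m))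
    (p : κ → ℕ) : ∃ i < ∏ j, m j, ∀ k j, ¬ m j ∣ p k + i := by
  choose a ha using fun j ↦ exists_forall_not_dvd_add (hm j) p
  obtain ⟨i, hi, hia⟩ := exists_lt_prod_forall_modEq (fun j ↦ (hm j).ne_bot) hcop a
  exact ⟨i, hi, fun k j hdvd ↦ ha j k ((((hia j).add_left (p k)).dvd_iff dvd_rfl).mp hdvd)⟩

end Moduli

open Classical in
/-- The two-colouring of `ℕ` attached to a family `m` of moduli: the multiples of at least one
`m j` get colour `1`, all other numbers colour `0`. -/
noncomputable def dvdColour {ι : Type*} (m : ι → ℕ) (x : ℕ) : Fin 2 :=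
  if ∃ j, m j ∣ x then 1 else 0

theorem dvdColour_eq_one_iff {ι : Type*} {m : ι → ℕ} {x : ℕ} :
    dvdColour m x = 1 ↔ ∃ j, m j ∣ x := by
  simp [dvdColour]

theorem dvdColour_eq_zero_iff {ι : Type*} {m : ι → ℕ} {x : ℕ} :
    dvdColour m x = 0 ↔ ∀ j, ¬ m j ∣ x := by
  simp [dvdColour]

theorem dvdColour_mod_prod {ι : Type*} [Fintype ι] (m : ι → ℕ) (x : ℕ) :
    dvdColour m (x % ∏ j, m j) = dvdColour m x := by
  have dvd_mod_iff (j : ι) : m j ∣ x % ∏ j, m j ↔ m j ∣ x :=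
    Nat.dvd_mod_iff (Finset.dvd_prod_of_mem m (Finset.mem_univ j))
  simp [dvdColour, dvd_mod_iff]

/-- Lemma 3.6 ("twocolours"): for every positive integer `n` there are a positive
integer `b` and a map `h : ℕ → 2` such that for every `p : n → ℕ` and every colour
`l < 2`, there is an `i < b` with `h ((p k + i) % b) = l` for every `k < n`. -/
theorem twocolours (n : ℕ) (hn : 0 < n) :
    ∃ b : ℕ, 0 < b ∧ ∃ h : ℕ → Fin 2,
      ∀ p : Fin n → ℕ, ∀ l : Fin 2,
        ∃ i < b, ∀ k : Fin n, h ((p k + i) % b) = l := by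
  obtain ⟨s, hs, hs_cop⟩ := exists_seq_gt_pairwise_coprime n
  let m (j : Fin n) : ℕ := s j
  have hlt (j : Fin n) : n < m j := hs j
  have hcop : Pairwise (Function.onFun Nat.Coprime m) :=
    hs_cop.comp_of_injective Fin.val_injective
  have hm (j : Fin n) : m j ≠ 0 := (hlt j).ne_bot
  refine ⟨∏ j, m j, Finset.prod_pos fun j _ ↦ (hm j).pos, dvdColour m, fun p ↦ ?_⟩
  simp only [dvdColour_mod_prod]
  refine Fin.forall_fin_two.mpr ⟨?colour_zero, ?colour_one⟩
  case colour_zero =>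
    simp only [dvdColour_eq_zero_iff]
    exact exists_lt_prod_forall_not_dvd_add (by simpa using hlt) hcop p
  case colour_one =>
    obtain ⟨i, hi, hdvd⟩ := exists_lt_prod_forall_dvd_add hm hcop p
    exact ⟨i, hi, fun k ↦ dvdColour_eq_one_iff.mpr ⟨k, hdvd k⟩⟩
end

section
/- For every positive integer n there exists a function f : ℤ → ℕ such that for all l,d ∈ ℕ there exists m ∈ ℕ such that for every function p : {0,…,n−1} → ℤ with |p(k)−p(k')| ≤ d for all k,k' < n, there exists a natural number i < m with f(p(k)+i) = l for every k < n. -/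
/-!
Write integers in a mixed radix system with radices `r j > n * b j`, and let the level of `x` be the
first `j` whose digit is below the threshold `b j`. Adding a multiple of the weight of position `j`
leaves the digits below `j` unchanged and translates the digit at `j`, modulo `r j`. Given `n`
points, one can therefore treat the positions from the bottom up: at each position `i < j`, some
translation makes the digits of all points at least `b i`, as each point excludes only `b i` of the
`r i > n * b i` residues. If the points have diameter less than `b j`, then so do their quotients by
the weight of position `j`, and a last translation brings all digits at `j` below `b j`. All points
then have level exactly `j`. With `b j = j + 1`, level `Nat.pair l d` handles points of diameter at
most `d`, so `f` can be the first component of the unpaired level.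
-/

namespace MixedRadix

lemma exists_forall_le_add_emod {ι : Type*} [Fintype ι] {b r : ℕ}
    (hbr : Fintype.card ι * b < r) (c : ι → ℤ) :
    ∃ t < r, ∀ k, (b : ℤ) ≤ (c k + (t : ℤ)) % r := by
  by_contra! h_small
  have : Nonempty ι := (h_small 0 (Nat.zero_lt_of_lt hbr)).nonempty
  choose! k hk using h_small
  let code (t : ℕ) : ι × ℤ := (k t, (c (k t) + (t : ℤ)) % r)
  have code_mem : ∀ t ∈ Finset.range r, code t ∈ Finset.univ ×ˢ Finset.Ico (0 : ℤ) b := by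
    intro t ht
    have htr : t < r := Finset.mem_range.1 ht
    have residue_nonneg : 0 ≤ (c (k t) + (t : ℤ)) % r := Int.emod_nonneg _ (by omega)
    exact Finset.mk_mem_product (Finset.mem_univ _) (Finset.mem_Ico.2 ⟨residue_nonneg, hk t htr⟩)
  have hcard : (Finset.univ ×ˢ Finset.Ico (0 : ℤ) b : Finset (ι × ℤ)).card
      < (Finset.range r).card := by
    simpa using hbr
  obtain ⟨t, ht, t', ht', hne, hcode⟩ :=
    Finset.exists_ne_map_eq_of_card_lt_of_maps_to hcard code_mem
  obtain ⟨hk_eq, hres⟩ := Prod.mk.inj hcode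
  have hmod : c (k t) + (t : ℤ) ≡ c (k t) + (t' : ℤ) [ZMOD r] := by
    rwa [← hk_eq] at hres
  have hmod_nat : t ≡ t' [MOD r] := Int.natCast_modEq_iff.1 (hmod.add_left_cancel' _)
  exact hne (hmod_nat.eq_of_lt_of_lt (Finset.mem_range.1 ht) (Finset.mem_range.1 ht'))

lemma exists_forall_add_emod_le {ι : Type*} [Finite ι] [Nonempty ι] {d r : ℕ} (hdr : d < r)
    (c : ι → ℤ) (hc : ∀ k k', |c k - c k'| ≤ (d : ℤ)) :
    ∃ t < r, ∀ k, (c k + (t : ℤ)) % r ≤ d := by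
  obtain ⟨k₀, hmin⟩ := Finite.exists_min c
  have hr : (0 : ℤ) < r := by omega
  obtain ⟨t, ht⟩ := Int.eq_ofNat_of_zero_le (Int.emod_nonneg (-c k₀) hr.ne')
  have htr : (t : ℤ) < r := ht ▸ Int.emod_lt_of_pos _ hr
  refine ⟨t, by exact_mod_cast htr, fun k => ?_⟩
  have hle : c k - c k₀ ≤ d := (abs_le.1 (hc k k₀)).2
  have hemod : (c k + (t : ℤ)) % r = c k - c k₀ := by
    rw [← ht, Int.add_emod_emod, ← sub_eq_add_neg]
    exact Int.emod_eq_of_lt (sub_nonneg.2 (hmin k)) (by omega)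
  exact hemod.trans_le hle

lemma abs_ediv_sub_ediv_le {w : ℤ} (hw : 0 < w) (x y : ℤ) : |x / w - y / w| ≤ |x - y| := by
  wlog hyx : y ≤ x generalizing x y
  · simpa only [abs_sub_comm] using this y x (le_of_not_ge hyx)
  have hlower : y / w ≤ x / w := Int.ediv_le_ediv hw hyx
  have hupper : x / w ≤ y / w + (x - y) := calc
    x / w ≤ (y + (x - y) * w) / w := Int.ediv_le_ediv hw (by nlinarith)
    _ = y / w + (x - y) := Int.add_mul_ediv_right _ _ hw.ne'
  rw [abs_of_nonneg (sub_nonneg.2 hlower), abs_of_nonneg (sub_nonneg.2 hyx)]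
  linarith

/-- The weight of position `j` in the mixed radix system with radices `r 0, r 1, …`. -/
def weight (r : ℕ → ℕ) (j : ℕ) : ℕ := ∏ i ∈ Finset.range j, r i

/-- The digit of `x` at position `j` in the mixed radix system with radices `r 0, r 1, …`. Since
integer division rounds down, negative integers are expanded in radix complement. -/
def digit (r : ℕ → ℕ) (j : ℕ) (x : ℤ) : ℤ := x / weight r j % r j

/-- The first position at which the mixed radix digit of `x` is below the threshold `b`, with
junk value `0` if there is no such position. -/
noncomputable def level (r b : ℕ → ℕ) (x : ℤ) : ℕ := sInf {j | digit r j x < b j}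

variable {r b : ℕ → ℕ} {i j : ℕ}

lemma weight_succ (r : ℕ → ℕ) (j : ℕ) : weight r (j + 1) = weight r j * r j :=
  Finset.prod_range_succ r j

lemma weight_pos (hr : ∀ i, 0 < r i) (j : ℕ) : 0 < weight r j :=
  Finset.prod_pos fun i _ => hr i

lemma weight_dvd_weight (r : ℕ → ℕ) (hij : i ≤ j) : weight r i ∣ weight r j :=
  Finset.prod_dvd_prod_of_subset _ _ r (Finset.range_mono hij)

lemma add_mul_weight_lt_weight_succ {s t : ℕ} (hs : s < weight r j) (ht : t < r j) :
    s + t * weight r j < weight r (j + 1) := by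
  rw [weight_succ]
  nlinarith

lemma digit_add_mul_weight (hr : ∀ i, 0 < r i) (j : ℕ) (x t : ℤ) :
    digit r j (x + t * weight r j) = (x / weight r j + t) % r j := by
  have hw : (weight r j : ℤ) ≠ 0 := by exact_mod_cast (weight_pos hr j).ne'
  rw [digit, Int.add_mul_ediv_right _ _ hw]

lemma digit_add_mul_weight_of_lt (hr : ∀ i, 0 < r i) (hij : i < j) (x t : ℤ) :
    digit r i (x + t * weight r j) = digit r i x := by
  obtain ⟨c, hc⟩ := weight_dvd_weight r (Nat.succ_le_of_lt hij)
  have hshift : t * (weight r j : ℤ) = (r i * (c * t)) * weight r i := by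
    rw [hc, weight_succ]
    push_cast
    ring
  rw [hshift, digit_add_mul_weight hr, Int.add_mul_emod_self_left, digit]

lemma level_eq {x : ℤ} (hlow : ∀ i < j, (b i : ℤ) ≤ digit r i x) (hj : digit r j x < b j) :
    level r b x = j :=
  IsLeast.csInf_eq ⟨hj, fun i hi => not_lt.1 fun hij => (hlow i hij).not_gt hi⟩

section Translation

variable {ι : Type*} [Fintype ι]

lemma exists_forall_le_digit_add (hbr : ∀ i, Fintype.card ι * b i < r i) (p : ι → ℤ) (j : ℕ) :
    ∃ s < weight r j, ∀ k, ∀ i < j, (b i : ℤ) ≤ digit r i (p k + (s : ℤ)) := by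
  have hr (i : ℕ) : 0 < r i := Nat.zero_lt_of_lt (hbr i)
  induction j with
  | zero => exact ⟨0, weight_pos hr 0, by simp⟩
  | succ j ih =>
    obtain ⟨s, hs, hlow⟩ := ih
    obtain ⟨t, ht, htop⟩ :=
      exists_forall_le_add_emod (hbr j) fun k => (p k + (s : ℤ)) / weight r j
    refine ⟨s + t * weight r j, add_mul_weight_lt_weight_succ hs ht, fun k i hi => ?_⟩
    push_cast
    rw [← add_assoc]
    obtain hij | rfl := Nat.lt_succ_iff_lt_or_eq.1 hi
    · exact (hlow k i hij).trans_eq (digit_add_mul_weight_of_lt hr hij _ _).symm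
    · exact (htop k).trans_eq (digit_add_mul_weight hr _ _ _).symm

lemma exists_forall_level_add_eq [Nonempty ι] (hbr : ∀ i, Fintype.card ι * b i < r i)
    {d : ℕ} (hd : d < b j) (p : ι → ℤ) (hp : ∀ k k', |p k - p k'| ≤ (d : ℤ)) :
    ∃ s < weight r (j + 1), ∀ k, level r b (p k + (s : ℤ)) = j := by
  have hr (i : ℕ) : 0 < r i := Nat.zero_lt_of_lt (hbr i)
  have hdr : d < r j := calc
    d < b j := hd
    _ ≤ Fintype.card ι * b j := Nat.le_mul_of_pos_left _ Fintype.card_pos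
    _ < r j := hbr j
  obtain ⟨s, hs, hlow⟩ := exists_forall_le_digit_add hbr p j
  have hquot (k k' : ι) :
      |(p k + (s : ℤ)) / weight r j - (p k' + (s : ℤ)) / weight r j| ≤ (d : ℤ) := by
    have hw : (0 : ℤ) < weight r j := by exact_mod_cast weight_pos hr j
    refine (abs_ediv_sub_ediv_le hw _ _).trans ?_
    simpa only [add_sub_add_right_eq_sub] using hp k k'
  obtain ⟨t, ht, htop⟩ := exists_forall_add_emod_le hdr _ hquot
  refine ⟨s + t * weight r j, add_mul_weight_lt_weight_succ hs ht, fun k => ?_⟩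
  push_cast
  rw [← add_assoc]
  apply level_eq
  · intro i hij
    exact (hlow k i hij).trans_eq (digit_add_mul_weight_of_lt hr hij _ _).symm
  · rw [digit_add_mul_weight hr]
    exact (htop k).trans_lt (by exact_mod_cast hd)

end Translation

end MixedRadix

/-- Corollary 3.8: for every positive integer `n` there is `f : ℤ → ℕ` such that
for all `l, d < ω` there is `m < ω` such that for every `p : n → ℤ` of diameter at
most `d`, there is `i < m` with `f (p k + i) = l` for every `k < n`. -/
theorem projection_map (n : ℕ) (hn : 0 < n) :
    ∃ f : ℤ → ℕ, ∀ l d : ℕ, ∃ m : ℕ, ∀ p : Fin n → ℤ,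
      (∀ k k' : Fin n, |p k - p k'| ≤ (d : ℤ)) →
      ∃ i < m, ∀ k : Fin n, f (p k + (i : ℤ)) = l := by
  have : Nonempty (Fin n) := ⟨⟨0, hn⟩⟩
  let b (j : ℕ) : ℕ := j + 1
  let r (j : ℕ) : ℕ := n * b j + 1
  have hbr (j : ℕ) : Fintype.card (Fin n) * b j < r j := by
    simp only [Fintype.card_fin, r, Nat.lt_succ_self]
  refine ⟨fun x => (MixedRadix.level r b x).unpair.1, fun l d =>
    ⟨MixedRadix.weight r (Nat.pair l d + 1), fun p hp => ?_⟩⟩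
  have hd : d < b (Nat.pair l d) := Nat.lt_succ_of_le (Nat.right_le_pair l d)
  obtain ⟨i, hi, hlevel⟩ := MixedRadix.exists_forall_level_add_eq hbr hd p hp
  exact ⟨i, hi, fun k => by simp only [hlevel k, Nat.unpair_pair]⟩
end
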